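/- arXiv:2502.20355 — 4 statements merged into one kernel-verified Lean document; each statement's English description precedes it below -/
import Mathlib

section
/- Let F be a finite field of odd cardinality q and fix d₀, d₁, d₂ ∈ F with d₂ ≠ 0. The number of pairs (c₀, c₁) ∈ F² such that the set {x ∈ F : d₂x² + d₁x + d₀ = c₁x + c₀} has exactly two elements equals q(q−1)/2. -/
/-!
A secant line of the graph of `p(x) = d₂x² + d₁x + d₀` is determined by the abscissae of its two
intersection points, and any two distinct abscissae `a, b` occur: the chord through them is
`y = (d₂(a + b) + d₁)x + (d₀ - d₂ab)`, and subtracting it from `p` leaves `d₂(x - a)(x - b)`.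
So secant lines are in bijection with the 2-element subsets of `F`, of which there are
`q.choose 2 = q(q - 1)/2`.
-/

/-- Let `F` be a finite field of odd cardinality `q` and fix
`d₀, d₁, d₂ ∈ F` with `d₂ ≠ 0`.  The number of pairs `(c₀, c₁) ∈ F²` such that the
set `{x ∈ F : d₂x² + d₁x + d₀ = c₁x + c₀}` has exactly two elements is `q(q−1)/2`. -/
theorem secant_line_count {F : Type*} [Field F] [Fintype F]
    (hodd : Odd (Fintype.card F)) (d0 d1 d2 : F) (hd2 : d2 ≠ 0) :
    Nat.card {c : F × F //
        Nat.card {x : F // d2 * x ^ 2 + d1 * x + d0 = c.2 * x + c.1} = 2}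
      = Fintype.card F * (Fintype.card F - 1) / 2 := by
  classical
  -- `S c` is the set of abscissae of the intersection points of the line `c` with the parabola.
  let S : F × F → Finset F := fun c =>
    Finset.univ.filter fun x => d2 * x ^ 2 + d1 * x + d0 = c.2 * x + c.1
  have hS : ∀ c x, x ∈ S c ↔ d2 * x ^ 2 + d1 * x + d0 = c.2 * x + c.1 := by
    intro c x
    simp [S]
  have hcard : ∀ c : F × F,
      Nat.card {x : F // d2 * x ^ 2 + d1 * x + d0 = c.2 * x + c.1} = (S c).card := by
    intro c
    rw [Nat.card_eq_fintype_card, Fintype.card_subtype]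
  simp only [hcard]
  rw [Nat.card_eq_fintype_card, Fintype.card_subtype, ← Nat.choose_two_right,
    ← Finset.card_univ, ← Finset.card_powersetCard]
  refine Finset.card_bij (fun c _ => S c) ?_ ?_ ?_
  · intro c hc
    simpa [Finset.mem_powersetCard] using hc
  · rintro ⟨c0, c1⟩ hc ⟨e0, e1⟩ - heq
    obtain ⟨a, b, hab, hs⟩ := Finset.card_eq_two.mp (Finset.mem_filter.mp hc).2
    have heq : S (c0, c1) = S (e0, e1) := heq
    have ha : a ∈ S (c0, c1) := by simp [hs]
    have hb : b ∈ S (c0, c1) := by simp [hs]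
    have ha' := heq ▸ ha
    have hb' := heq ▸ hb
    rw [hS] at ha hb ha' hb'
    simp only at ha hb ha' hb'
    have h1 : (c1 - e1) * (a - b) = 0 := by linear_combination ha' - ha - hb' + hb
    have h2 : c1 = e1 :=
      sub_eq_zero.mp ((mul_eq_zero.mp h1).resolve_right (sub_ne_zero.mpr hab))
    subst h2
    have h3 : c0 = e0 := by linear_combination ha' - ha
    rw [h3]
  · intro s hs
    obtain ⟨a, b, hab, rfl⟩ := Finset.card_eq_two.mp (Finset.mem_powersetCard.mp hs).2
    have key : S (d0 - d2 * a * b, d2 * (a + b) + d1) = {a, b} := by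
      ext x
      rw [hS, Finset.mem_insert, Finset.mem_singleton]
      constructor
      · intro h
        have h1 : d2 * ((x - a) * (x - b)) = 0 := by linear_combination h
        rcases mul_eq_zero.mp ((mul_eq_zero.mp h1).resolve_left hd2) with h | h
        · exact Or.inl (sub_eq_zero.mp h)
        · exact Or.inr (sub_eq_zero.mp h)
      · rintro (rfl | rfl) <;> ring
    refine ⟨_, ?_, key⟩
    rw [Finset.mem_filter, key]
    exact ⟨Finset.mem_univ _, Finset.card_pair hab⟩
end

section
/- Let F be a finite field with q elements. The number of triples (a, b, c) ∈ F³ such that the set of roots in F of the polynomial x³ + a·x² + b·x + c has exactly one element equals (q³ − q² + 2q)/2. -/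
/-!
A cubic whose only root in `F` is `r` factors uniquely as `(x - r) * g (x - r)`, where
`g = y² + u y + v` has no nonzero root; conversely every such pair `(r, g)` gives a cubic with the
single root `r`. So the count is `q` times the number of such `g`. A monic quadratic without nonzero
roots either has no root at all or is `y²`, and the quadratics that do have a root correspond to
unordered pairs of elements of `F`, so there are `q (q + 1) / 2` of them. This gives
`q * (q² - q (q + 1) / 2 + 1)`.
-/

/-- The coefficients `(u, v)` of `y² + u y + v = (y - a) (y - b)`, as a function of the unordered
pair of roots `{a, b}`. -/
def quadraticOfRoots (F : Type*) [Field F] : Sym2 F → F × F :=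
  Sym2.lift ⟨fun a b => (-(a + b), a * b), fun a b => by simp [add_comm, mul_comm]⟩

theorem quadraticOfRoots_injective (F : Type*) [Field F] :
    Function.Injective (quadraticOfRoots F) := by
  intro s t
  induction s using Sym2.ind with | _ a b
  induction t using Sym2.ind with | _ c d
  intro h
  simp only [quadraticOfRoots, Sym2.lift_mk, Prod.mk.injEq] at h
  obtain ⟨h1, h2⟩ := h
  have h3 : (a - c) * (a - d) = 0 := by linear_combination -a * h1 - h2
  rw [Sym2.eq_iff]
  rcases mul_eq_zero.mp h3 with h | h
  · left; exact ⟨by linear_combination h, by linear_combination -h1 - h⟩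
  · right; exact ⟨by linear_combination h, by linear_combination -h1 - h⟩

theorem range_quadraticOfRoots (F : Type*) [Field F] :
    Set.range (quadraticOfRoots F) = {p : F × F | ∃ y, y ^ 2 + p.1 * y + p.2 = 0} := by
  ext ⟨u, v⟩
  constructor
  · rintro ⟨s, hs⟩
    induction s using Sym2.ind with | _ a b
    simp only [quadraticOfRoots, Sym2.lift_mk, Prod.mk.injEq] at hs
    exact ⟨a, by rw [← hs.1, ← hs.2]; ring⟩
  · rintro ⟨y, hy⟩
    refine ⟨s(y, -u - y), ?_⟩
    simp only [quadraticOfRoots, Sym2.lift_mk, Prod.mk.injEq]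
    exact ⟨by ring, by linear_combination -hy⟩

theorem ncard_quadratics_with_root (F : Type*) [Field F] [Fintype F] :
    {p : F × F | ∃ y, y ^ 2 + p.1 * y + p.2 = 0}.ncard = (Fintype.card F + 1).choose 2 := by
  classical
  rw [← range_quadraticOfRoots, ← Set.image_univ,
    Set.ncard_image_of_injective _ (quadraticOfRoots_injective F), Set.ncard_univ,
    Nat.card_eq_fintype_card, Sym2.card]

/-- The quadratics without nonzero roots are the rootless ones together with `y²`. -/
theorem ncard_quadratics_no_nonzero_root (F : Type*) [Field F] [Fintype F] :
    {p : F × F | ∀ y, y ^ 2 + p.1 * y + p.2 = 0 → y = 0}.ncard + (Fintype.card F + 1).choose 2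
      = Fintype.card F ^ 2 + 1 := by
  have h : {p : F × F | ∀ y, y ^ 2 + p.1 * y + p.2 = 0 → y = 0}
      = insert (0, 0) {p : F × F | ∃ y, y ^ 2 + p.1 * y + p.2 = 0}ᶜ := by
    ext ⟨u, v⟩
    simp only [Set.mem_ofPred_eq, Set.mem_insert_iff, Set.mem_compl_iff, Prod.mk.injEq, not_exists]
    constructor
    · intro h
      by_cases hv : v = 0
      · -- the second root `-u` of `y² + u y` has to vanish
        exact Or.inl ⟨neg_eq_zero.mp (h (-u) (by rw [hv]; ring)), hv⟩
      · refine Or.inr fun y hy => hv ?_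
        have := h y hy
        simpa [this] using hy
    · rintro (⟨rfl, rfl⟩ | h) y hy
      · simpa using hy
      · exact absurd hy (h y)
  have hc := Set.ncard_add_ncard_compl {p : F × F | ∃ y, y ^ 2 + p.1 * y + p.2 = 0}
  rw [ncard_quadratics_with_root, Nat.card_eq_fintype_card, Fintype.card_prod] at hc
  rw [h, Set.ncard_insert_of_notMem (by simp)]
  rw [sq]
  omega

/-- The coefficients of `(x - r) * ((x - r)² + u (x - r) + v)`. -/
def cubicOfRoot {F : Type*} [Field F] (r u v : F) : F × F × F :=
  (u - 3 * r, 3 * r ^ 2 - 2 * u * r + v, -r ^ 3 + u * r ^ 2 - v * r)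

theorem cubicOfRoot_eval {F : Type*} [Field F] (r u v x : F) :
    x ^ 3 + (cubicOfRoot r u v).1 * x ^ 2 + (cubicOfRoot r u v).2.1 * x + (cubicOfRoot r u v).2.2
      = (x - r) * ((x - r) ^ 2 + u * (x - r) + v) := by
  simp only [cubicOfRoot]; ring

theorem cubicOfRoot_root_iff {F : Type*} [Field F] {r u v : F}
    (h : ∀ y, y ^ 2 + u * y + v = 0 → y = 0) (x : F) :
    x ^ 3 + (cubicOfRoot r u v).1 * x ^ 2 + (cubicOfRoot r u v).2.1 * x + (cubicOfRoot r u v).2.2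
      = 0 ↔ x = r := by
  rw [cubicOfRoot_eval, mul_eq_zero, sub_eq_zero]
  exact ⟨fun hx => hx.elim id fun hx => sub_eq_zero.mp (h _ hx), Or.inl⟩

theorem card_roots_eq_one_iff {F : Type*} [Field F] (t : F × F × F) :
    Nat.card {x : F // x ^ 3 + t.1 * x ^ 2 + t.2.1 * x + t.2.2 = 0} = 1 ↔
      ∃ r, ∀ x, x ^ 3 + t.1 * x ^ 2 + t.2.1 * x + t.2.2 = 0 ↔ x = r := by
  change Set.ncard {x : F | x ^ 3 + t.1 * x ^ 2 + t.2.1 * x + t.2.2 = 0} = 1 ↔ _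
  simp [Set.ncard_eq_one, Set.ext_iff]

theorem card_cubics_eq_mul (F : Type*) [Field F] [Fintype F] :
    Nat.card {t : F × F × F //
        Nat.card {x : F // x ^ 3 + t.1 * x ^ 2 + t.2.1 * x + t.2.2 = 0} = 1}
      = Fintype.card F * {p : F × F | ∀ y, y ^ 2 + p.1 * y + p.2 = 0 → y = 0}.ncard := by
  rw [← Nat.card_eq_fintype_card, ← Nat.card_coe_set_eq, ← Nat.card_prod]
  symm
  refine Nat.card_congr (Equiv.ofBijective (fun z => ⟨cubicOfRoot z.1 z.2.1.1 z.2.1.2,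
    (card_roots_eq_one_iff _).mpr ⟨z.1, cubicOfRoot_root_iff z.2.2⟩⟩) ⟨?_, ?_⟩)
  · rintro ⟨r, ⟨⟨u, v⟩, h⟩⟩ ⟨r', ⟨⟨u', v'⟩, h'⟩⟩ e
    replace e : cubicOfRoot r u v = cubicOfRoot r' u' v' := congrArg Subtype.val e
    have hr : r = r' := by
      have := (cubicOfRoot_root_iff h r).mpr rfl
      rw [e] at this
      exact (cubicOfRoot_root_iff h' r).mp this
    subst hr
    simp only [cubicOfRoot, Prod.mk.injEq] at e
    have hu : u = u' := by linear_combination e.1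
    subst hu
    have hv : v = v' := by linear_combination e.2.1
    subst hv
    rfl
  · rintro ⟨⟨a, b, c⟩, ht⟩
    obtain ⟨r, hr⟩ := (card_roots_eq_one_iff _).mp ht
    have h0 := (hr r).mpr rfl
    simp only at hr h0
    -- Taylor expansion of the cubic at its root `r`
    have e : cubicOfRoot r (a + 3 * r) (3 * r ^ 2 + 2 * a * r + b) = (a, b, c) := by
      simp only [cubicOfRoot, Prod.mk.injEq]
      exact ⟨by ring, by ring, by linear_combination -h0⟩
    refine ⟨⟨r, ⟨(a + 3 * r, 3 * r ^ 2 + 2 * a * r + b), fun y hy => ?_⟩⟩, Subtype.ext e⟩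
    simp only at hy
    have := (hr (y + r)).mp (by linear_combination y * hy + h0)
    simpa using this

/-- Over a finite field `F` with `q` elements, the number of triples
`(a, b, c) ∈ F³` such that the set of roots in `F` of `x³ + ax² + bx + c` has exactly
one element equals `(q³ − q² + 2q)/2`. -/
theorem cubics_with_one_root {F : Type*} [Field F] [Fintype F] :
    Nat.card {t : F × F × F //
        Nat.card {x : F // x ^ 3 + t.1 * x ^ 2 + t.2.1 * x + t.2.2 = 0} = 1}
      = (Fintype.card F ^ 3 - Fintype.card F ^ 2 + 2 * Fintype.card F) / 2 := by
  rw [card_cubics_eq_mul]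
  have h := ncard_quadratics_no_nonzero_root F
  have hq : 0 < Fintype.card F := Fintype.card_pos
  generalize {p : F × F | ∀ y, y ^ 2 + p.1 * y + p.2 = 0 → y = 0}.ncard = N at *
  generalize Fintype.card F = q at *
  have hC : (q + 1).choose 2 * 2 = (q + 1) * q := by
    rw [Nat.choose_two_right, Nat.add_sub_cancel]
    exact Nat.div_mul_cancel (Nat.even_mul_pred_self (q + 1)).two_dvd
  have hle : q ^ 2 ≤ q ^ 3 := Nat.pow_le_pow_right hq (by norm_num)
  symm
  apply Nat.div_eq_of_eq_mul_left two_pos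
  zify [hle] at *
  linear_combination -2 * (q : ℤ) * h + q * hC
end

section
/- Let F be a finite field with q elements, let V = {(x, y) ∈ F² : x·y = 0}, and let ξ be a random vector uniformly distributed on V. Then |V| = 2q − 1, and the Shannon entropy of the second coordinate ξ₂ equals (q/(2q−1))·log((2q−1)/q) + ((q−1)/(2q−1))·log(2q−1). -/
/-!
The fiber of `V = {x * y = 0}` over `y` is the whole line `F` when `y = 0` and the single point
`(0, y)` otherwise (`card_fiber`). Summing over `y` gives `|V| = q + (q - 1)`
(`card_variety`), and the second coordinate has one atom of mass `q / (2q - 1)` together with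
`q - 1` atoms of mass `1 / (2q - 1)`, from which the entropy is read off.
-/

lemma card_fiber {F : Type*} [Field F] [Fintype F] [DecidableEq F] (y : F) :
    (Finset.univ.filter fun v : F × F => v.1 * v.2 = 0 ∧ v.2 = y).card =
      if y = 0 then Fintype.card F else 1 := by
  split_ifs with hy
  · subst hy
    have h : (Finset.univ.filter fun v : F × F => v.1 * v.2 = 0 ∧ v.2 = 0) =
        Finset.univ ×ˢ {0} := by
      ext ⟨a, b⟩
      simp only [Finset.mem_filter, Finset.mem_univ, true_and, Finset.mem_product,
        Finset.mem_singleton, mul_eq_zero]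
      tauto
    rw [h]
    simp
  · rw [Finset.card_eq_one]
    refine ⟨(0, y), ?_⟩
    ext ⟨a, b⟩
    simp only [Finset.mem_filter, Finset.mem_univ, true_and, Finset.mem_singleton, Prod.mk.injEq]
    constructor
    · rintro ⟨h, rfl⟩
      exact ⟨(mul_eq_zero.mp h).resolve_right hy, rfl⟩
    · rintro ⟨rfl, rfl⟩
      simp

/-- Summing a function `f` of the fiber size over all `y`: one fiber has size `q`, and the other
`q - 1` have size `1`. Used both for `|V|` and for the entropy. -/
lemma sum_fiber {F R : Type*} [Field F] [Fintype F] [DecidableEq F] [Semiring R]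
    (f : ℕ → R) :
    ∑ y : F, f (if y = 0 then Fintype.card F else 1) =
      f (Fintype.card F) + ((Fintype.card F - 1 : ℕ) : R) * f 1 := by
  rw [← Finset.add_sum_erase _ _ (Finset.mem_univ (0 : F)), if_pos rfl]
  congr 1
  rw [Finset.sum_congr rfl (g := fun _ => f 1)
    (fun y hy => by rw [if_neg (Finset.ne_of_mem_erase hy)])]
  simp [Finset.card_erase_of_mem, nsmul_eq_mul]

lemma card_variety {F : Type*} [Field F] [Fintype F] [DecidableEq F] :
    (Finset.univ.filter fun v : F × F => v.1 * v.2 = 0).card = 2 * Fintype.card F - 1 := by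
  rw [Finset.card_eq_sum_card_fiberwise (f := Prod.snd) (t := Finset.univ) (by simp)]
  simp only [Finset.filter_filter, card_fiber]
  rw [sum_fiber (fun n => n)]
  have := Fintype.card_pos (α := F)
  simp only [Nat.cast_id]
  omega

/-- Let `F` be a finite field with `q` elements and
`V = {(x, y) ∈ F² : x·y = 0}`.  Then `|V| = 2q − 1`, and the Shannon entropy of the
second coordinate of a random vector uniformly distributed on `V` — i.e. of the
pushforward of the uniform distribution on `V` under `(x, y) ↦ y` — equals
`(q/(2q−1))·log((2q−1)/q) + ((q−1)/(2q−1))·log(2q−1)`. -/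
theorem entropy_of_reducible_variety {F : Type*} [Field F] [Fintype F] [DecidableEq F] :
    (Finset.univ.filter fun v : F × F => v.1 * v.2 = 0).card = 2 * Fintype.card F - 1 ∧
    (- ∑ y : F,
        (((Finset.univ.filter fun v : F × F => v.1 * v.2 = 0 ∧ v.2 = y).card : ℝ) /
            ((Finset.univ.filter fun v : F × F => v.1 * v.2 = 0).card : ℝ)) *
          Real.log
            (((Finset.univ.filter fun v : F × F => v.1 * v.2 = 0 ∧ v.2 = y).card : ℝ) /
              ((Finset.univ.filter fun v : F × F => v.1 * v.2 = 0).card : ℝ)))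
    = ((Fintype.card F : ℝ) / (2 * (Fintype.card F : ℝ) - 1)) *
          Real.log ((2 * (Fintype.card F : ℝ) - 1) / (Fintype.card F : ℝ))
      + (((Fintype.card F : ℝ) - 1) / (2 * (Fintype.card F : ℝ) - 1)) *
          Real.log (2 * (Fintype.card F : ℝ) - 1) := by
  refine ⟨card_variety, ?_⟩
  have hq : 1 ≤ Fintype.card F := Fintype.card_pos
  simp only [card_fiber, card_variety]
  rw [sum_fiber (fun n => ((n : ℝ) / ((2 * Fintype.card F - 1 : ℕ) : ℝ)) *
    Real.log ((n : ℝ) / ((2 * Fintype.card F - 1 : ℕ) : ℝ)))]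
  have hqR : (1 : ℝ) ≤ Fintype.card F := by exact_mod_cast hq
  rw [Nat.cast_sub hq, Nat.cast_sub (by omega : 1 ≤ 2 * Fintype.card F)]
  push_cast
  generalize (Fintype.card F : ℝ) = q at hqR
  have h1 : q ≠ 0 := by linarith
  have h2 : 2 * q - 1 ≠ 0 := by linarith
  rw [Real.log_div h1 h2, Real.log_div h2 h1, Real.log_div one_ne_zero h2, Real.log_one]
  ring
end

section
/- Let N be a finite set, let E/F be a field extension, and let x = (x_i : i ∈ N) be a family of elements of E. Define r : 2^N → ℝ by letting r(I) be the transcendence degree over F of the intermediate field F(x_i : i ∈ I) generated by the elements indexed by I. Then r lies in the closure, in ℝ^{2^N}, of the set of all non-negative scalar multiples of entropy profiles of N-indexed random vectors; that is, r ∈ closure{ c·h_ξ : c ≥ 0 and ξ = (ξ_i : i ∈ N) is a random vector with each ξ_i taking finitely many values }, where h_ξ(I) is the Shannon entropy of the joint marginal (ξ_i : i ∈ I). -/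
/-!
Algebraic matroids are almost entropic.  The random vector is a uniformly random point, over a large
finite field `k`, of a variety whose generic point is `x`, and the content of the proof is that
there are enough such points and that algebraic dependence bounds the number of values.

*Model.*  Choose a basis `B` of the family `x`.  In positive characteristic replace each `x i` by a
power that is separable over `F(x_B)`; this does not change algebraic dependence.  The new family
lies in a field generated over `F(x_B)` by one element `θ` with monic minimal polynomial `f` over
`F[x_B]`, and `a * f + b * f' = Δ` for some `a`, `b` and some non-zero `Δ` in `F[x_B]`.  After
enlarging `Δ`, the family and all its relations, normalised to have invertible leading coefficients,
are defined over `T = R[x_B, θ, 1/Δ]` for a finitely generated subring `R` of `F`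
(`exists_model`, `exists_field_model`, `exists_arith_model`).

*Specialisation.*  By the Nullstellensatz over `ℤ` there is a point of affine space over a finite
field at which `Δ ≠ 0` (`exists_finite_point`).  Over a large finite extension `k` in which `f`
splits at that point, every `y ∈ k^B` such that `Δ(y) ≠ 0` and `f(y, T)` has a root in `k` yields a
homomorphism from the model to `k`.

*Counting.*  The number of such `y` is at least a fixed proportion of `|k|^|B|` (`many_points`).
On lines through the split point this is a statement about curves `f(t, T) = 0` (`curve_theorem`),
proved by the elementary method of Stepanov and Bombieri: in the splitting field of `f`, the points
whose Frobenius is a given automorphism number at most `(1 + ε) |k|` (`stepanov_bound`), and since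
all points are distributed among the automorphisms, the trivial one receives a positive proportion
(`curve_aux`).  Only upper bounds are proved by the polynomial method, and the split point supplies
the rational place that it needs.

*Entropy.*  If `x i` is algebraic over `x_J`, then its specialisation takes a bounded number of
values when those of `x_J` are fixed (`fiber_card_le`).  Together with the number of points this
gives `H(ξ_I) = r(I) log |k| + O(1)` (`profile_estimate`, `exists_estimate`), and it remains to
divide by `log |k|` and let `k` grow (`mem_closure_of_estimate`).
-/

/-- The probability that the marginal on `I` of the random vector `ξ` (on the finite
probability space `Ω` with weights `w`) takes the value `v` (recorded as the function
`N → ℕ` that vanishes outside `I`). -/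
noncomputable def margProb {N Ω : Type*} [Fintype N] [DecidableEq N] [Fintype Ω]
    (w : Ω → ℝ) (ξ : N → Ω → ℕ) (I : Finset N) (v : N → ℕ) : ℝ :=
  ∑ ω ∈ Finset.univ.filter (fun ω => (fun i => if i ∈ I then ξ i ω else 0) = v), w ω

/-- The Shannon entropy (natural logarithm, `0·log 0 = 0`) of the joint marginal
distribution of `(ξ_i : i ∈ I)`. -/
noncomputable def margEntropy {N Ω : Type*} [Fintype N] [DecidableEq N] [Fintype Ω]
    (w : Ω → ℝ) (ξ : N → Ω → ℕ) (I : Finset N) : ℝ :=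
  - ∑ v ∈ Finset.univ.image (fun ω => fun i => if i ∈ I then ξ i ω else 0),
      margProb w ξ I v * Real.log (margProb w ξ I v)

/-- An `N`-indexed random vector of finitely-valued random variables: a finite
probability space together with a family of random variables `ξ_i`, `i ∈ N`. -/
structure FinRandomVector (N : Type*) where
  Ω : Type
  [fintypeΩ : Fintype Ω]
  w : Ω → ℝ
  ξ : N → Ω → ℕ
  w_nonneg : ∀ ω, 0 ≤ w ω
  w_sum_one : ∑ ω, w ω = 1

attribute [instance] FinRandomVector.fintypeΩ

/-- The entropy profile `I ↦ H(ξ_i : i ∈ I)` of a random vector. -/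
noncomputable def FinRandomVector.profile {N : Type*} [Fintype N] [DecidableEq N]
    (X : FinRandomVector N) (I : Finset N) : ℝ :=
  margEntropy X.w X.ξ I

set_option linter.unusedSectionVars false

/-! ### Zeros of functions on a curve and the Stepanov–Bombieri bound -/

section

open Polynomial

section Stepanov

variable {k : Type*} [Field k] [Fintype k]
variable {B : Type*} [CommRing B] [IsDedekindDomain B] [Algebra k[X] B] [Algebra k B]
  [IsScalarTower k k[X] B] [Module.Free k[X] B] [Module.Finite k[X] B]

theorem finite_quot_span {u : B} (hu : u ≠ 0) : Module.Finite k (B ⧸ Ideal.span {u}) := by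
  have hI : Ideal.span {u} ≠ ⊥ := Ideal.span_singleton_eq_bot.not.2 hu
  have b := Module.Free.chooseBasis k[X] B
  have e := Ideal.quotientEquivDirectSum k b hI
  exact Module.Finite.equiv e.symm

theorem finrank_quot_span {u : B} (hu : u ≠ 0) :
    Module.finrank k (B ⧸ Ideal.span {u}) = (Algebra.norm k[X] u).natDegree :=
  finrank_quotient_span_eq_natDegree_norm (Module.Free.chooseBasis k[X] B) hu

/-- The homomorphisms killing `u` factor through `B/(u)`, whose dimension is the degree of the norm
of `u`; distinct homomorphisms to a field are linearly independent. -/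
theorem card_homs_le {Ω : Type*} [Field Ω] [Algebra k Ω] {u : B} (hu : u ≠ 0)
    (T : Finset (B →ₐ[k] Ω)) (hT : ∀ ψ ∈ T, ψ u = 0) :
    T.card ≤ (Algebra.norm k[X] u).natDegree := by
  classical
  have := finite_quot_span (k := k) hu
  rw [← finrank_quot_span (k := k) hu]
  refine le_trans ?_ (card_algHom_le_finrank k (B ⧸ Ideal.span {u}) Ω)
  have h0 : ∀ ψ : T, ∀ a ∈ Ideal.span {u}, ψ.1 a = 0 := by
    intro ψ a ha
    obtain ⟨c, rfl⟩ := Ideal.mem_span_singleton'.1 ha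
    simp [hT ψ.1 ψ.2]
  let F : T → ((B ⧸ Ideal.span {u}) →ₐ[k] Ω) := fun ψ =>
    Ideal.Quotient.liftₐ _ ψ.1 (h0 ψ)
  have hF : Function.Injective F := by
    intro ψ ψ' h
    apply Subtype.ext
    ext b
    have := DFunLike.congr_fun h (Ideal.Quotient.mk _ b)
    exact this
  have := Nat.card_le_card_of_injective F hF
  simpa using this

theorem card_quot_pow {P : Ideal B} [P.IsPrime] (hP : P ≠ ⊥)
    (hres : ∀ b : B, ∃ c : k, b - algebraMap k B c ∈ P) (j : ℕ) :
    Nat.card (B ⧸ P ^ j) = Fintype.card k ^ j := by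
  have hcard : Nat.card (B ⧸ P) = Fintype.card k := by
    rw [← Nat.card_eq_fintype_card]
    refine (Nat.card_congr (Equiv.ofBijective (algebraMap k (B ⧸ P)) ⟨?_, ?_⟩)).symm
    · exact (algebraMap k (B ⧸ P)).injective
    · intro x
      obtain ⟨b, rfl⟩ := Ideal.Quotient.mk_surjective x
      obtain ⟨c, hc⟩ := hres b
      exact ⟨c, ((Ideal.Quotient.mk_eq_mk_iff_sub_mem b _).2 hc).symm⟩
  rw [← hcard]
  exact cardQuot_pow_of_prime hP

/-- An element of `P ^ j`, where `P` is a prime with residue field `k`, has norm of degree at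
least `j`. -/
theorem le_natDegree_norm {P : Ideal B} [P.IsPrime] (hP : P ≠ ⊥)
    (hres : ∀ b : B, ∃ c : k, b - algebraMap k B c ∈ P) {u : B} (hu : u ≠ 0) {j : ℕ}
    (hj : u ∈ P ^ j) :
    j ≤ (Algebra.norm k[X] u).natDegree := by
  have h1 := card_quot_pow hP hres j
  have := finite_quot_span (k := k) hu
  have : Finite (B ⧸ Ideal.span {u}) := Module.finite_of_finite k
  have h2 : Nat.card (B ⧸ Ideal.span {u}) = Fintype.card k ^ (Algebra.norm k[X] u).natDegree := by
    rw [← finrank_quot_span (k := k) hu, Module.natCard_eq_pow_finrank (K := k),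
      Nat.card_eq_fintype_card]
  have h3 : Ideal.span {u} ≤ P ^ j := (Ideal.span_singleton_le_iff_mem _).2 hj
  have h4 := Nat.card_le_card_of_surjective _ (Ideal.Quotient.factor_surjective h3)
  rw [h1, h2] at h4
  exact (Nat.pow_le_pow_iff_right Fintype.one_lt_card).1 h4

/-- Vanishing orders are additive: if `x` vanishes to order exactly `e` at `P` and `x * u` to order at
least `e + s`, then `u` vanishes to order at least `s`. -/
theorem mem_pow_of_mul_mem {P : Ideal B} [hp : P.IsPrime] (hP : P ≠ ⊥) {x u : B} {e s : ℕ}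
    (hx : x ∈ P ^ e) (hx' : x ∉ P ^ (e + 1)) (h : x * u ∈ P ^ (e + s)) : u ∈ P ^ s := by
  have hpr := Ideal.prime_of_isPrime hP hp
  induction s with
  | zero => simp
  | succ s ih =>
    have h1 : u ∈ P ^ s := ih (Ideal.pow_le_pow_right (by omega) h)
    simp only [← Ideal.span_singleton_le_iff_mem, ← Ideal.dvd_iff_le] at *
    rw [← Ideal.span_singleton_mul_span_singleton] at h
    exact (succ_dvd_or_succ_dvd_of_succ_sum_dvd_mul hpr hx h1 h).resolve_left hx'

theorem pow_notMem_pow {P : Ideal B} [hp : P.IsPrime] (hP : P ≠ ⊥) {x : B} {e : ℕ}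
    (hx : x ∈ P ^ e) (hx' : x ∉ P ^ (e + 1)) (q : ℕ) :
    x ^ q ∈ P ^ (e * q) ∧ x ^ q ∉ P ^ (e * q + 1) := by
  induction q with
  | zero =>
    simp only [pow_zero, mul_zero, Ideal.one_eq_top, Submodule.mem_top, zero_add, pow_one, true_and]
    exact fun h => hp.ne_top ((Ideal.eq_top_iff_one P).2 h)
  | succ q ih =>
    refine ⟨by rw [pow_mul]; exact Ideal.pow_mem_pow hx _, fun h => ih.2 ?_⟩
    refine mem_pow_of_mul_mem hP hx hx' (u := x ^ q) (s := e * q + 1) ?_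
    rw [← pow_succ']
    convert h using 2
    ring

/-- A finite-dimensional space of functions has as many distinct vanishing orders at a rational
place as its dimension. -/
theorem exists_echelon {P : Ideal B} [P.IsPrime] (hP : P ≠ ⊥)
    (hres : ∀ b : B, ∃ c : k, b - algebraMap k B c ∈ P) (r : ℕ) :
    ∀ (A : Submodule k B), (∀ a ∈ A, a ≠ 0 → ∃ j, a ∉ P ^ j) → Module.finrank k A = r →
      ∀ s, (∀ a ∈ A, a ∈ P ^ s) →
      ∃ (v : Fin r → B) (o : Fin r → ℕ), StrictMono o ∧ (∀ i, s ≤ o i) ∧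
        ∀ i, v i ∈ A ∧ v i ∈ P ^ (o i) ∧ v i ∉ P ^ (o i + 1) := by
  induction r with
  | zero =>
    intro A _ _ s _
    exact ⟨Fin.elim0, Fin.elim0, fun i => i.elim0, fun i => i.elim0, fun i => i.elim0⟩
  | succ r ih =>
    intro A hA hr s hs
    classical
    have hne : A ≠ ⊥ := by
      rintro rfl
      simp at hr
    obtain ⟨a, ha, ha0⟩ := Submodule.exists_mem_ne_zero_of_ne_bot hne
    have hex : ∃ j, ∃ a ∈ A, a ∉ P ^ (j + 1) := by
      obtain ⟨j, hj⟩ := hA a ha ha0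
      exact ⟨j, a, ha, fun h => hj (Ideal.pow_le_pow_right (by omega) h)⟩
    obtain ⟨w, hw, hw'⟩ := Nat.find_spec hex
    set j := Nat.find hex with hj
    have hall : ∀ a ∈ A, a ∈ P ^ j := by
      intro a ha
      rcases Nat.eq_zero_or_pos j with h0 | h0
      · rw [h0]; simp
      · by_contra hcon
        have : j - 1 < j := by omega
        exact Nat.find_min hex this ⟨a, ha, by rwa [Nat.sub_add_cancel h0]⟩
    have hsj : s ≤ j := by
      by_contra hcon
      exact hw' (Ideal.pow_le_pow_right (by omega) (hs w hw))
    let A' : Submodule k B := A ⊓ (P ^ (j + 1)).restrictScalars k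
    have hdec : ∀ a ∈ A, ∃ c : k, a - c • w ∈ A' := by
      intro a ha
      obtain ⟨d, e, he, hde⟩ := Ideal.exists_mul_add_mem_pow_succ hP w a (hall w hw) hw' (hall a ha)
      obtain ⟨c, hc⟩ := hres d
      refine ⟨c, A.sub_mem ha (A.smul_mem _ hw), ?_⟩
      have : a - c • w = w * (d - algebraMap k B c) + e := by
        rw [← hde, Algebra.smul_def]; ring
      change a - c • w ∈ P ^ (j + 1)
      rw [this]
      exact Ideal.add_mem _ (by rw [pow_succ]; exact Ideal.mul_mem_mul (hall w hw) hc) he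
    have hsup : A = A' ⊔ Submodule.span k {w} := by
      apply le_antisymm
      · intro a ha
        obtain ⟨c, hc⟩ := hdec a ha
        rw [Submodule.mem_sup]
        exact ⟨_, hc, c • w, Submodule.smul_mem _ _ (Submodule.mem_span_singleton_self w), by ring⟩
      · exact sup_le inf_le_left ((Submodule.span_singleton_le_iff_mem _ _).2 hw)
    have hfd : Module.Finite k A := Module.finite_of_finrank_pos (by omega)
    have hfd' : Module.Finite k A' := Submodule.finiteDimensional_of_le (inf_le_left : A' ≤ A)
    have hw0 : w ≠ 0 := by rintro rfl; simp at hw'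
    have hdisj : A' ⊓ Submodule.span k {w} = ⊥ := by
      rw [eq_bot_iff]
      rintro x ⟨hx1, hx2⟩
      obtain ⟨c, rfl⟩ := Submodule.mem_span_singleton.1 hx2
      by_cases hc : c = 0
      · simp [hc]
      · exfalso
        apply hw'
        have := ((P ^ (j + 1)).restrictScalars k).smul_mem c⁻¹ hx1.2
        rwa [smul_smul, inv_mul_cancel₀ hc, one_smul] at this
    have hr' : Module.finrank k A' = r := by
      have := Submodule.finrank_sup_add_finrank_inf_eq A' (Submodule.span k {w})
      rw [hdisj, ← hsup, finrank_bot, finrank_span_singleton hw0] at this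
      omega
    obtain ⟨v, o, ho, hso, hv⟩ := ih A' (fun a ha => hA a ha.1) hr' (j + 1) (fun a ha => ha.2)
    refine ⟨Fin.cons w v, Fin.cons j o, ?_, ?_, ?_⟩
    · intro i i' hii
      induction i' using Fin.cases with
      | zero => simp at hii
      | succ i' =>
        induction i using Fin.cases with
        | zero => simpa using lt_of_lt_of_le (Nat.lt_succ_self j) (hso i')
        | succ i => simpa using ho (by simpa using hii)
    · intro i
      induction i using Fin.cases with
      | zero => simpa
      | succ i => simp; exact le_trans (by omega) (hso i)
    · intro i
      induction i using Fin.cases with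
      | zero => exact ⟨hw, hall w hw, hw'⟩
      | succ i => exact ⟨(hv i).1.1, (hv i).2⟩

end Stepanov

section Stepanov2

variable {k : Type*} [Field k] [Fintype k]
variable {B : Type*} [CommRing B] [IsDedekindDomain B] [Algebra k[X] B] [Algebra k B]
  [IsScalarTower k k[X] B] [Module.Free k[X] B] [Module.Finite k[X] B]

/-- A space of functions whose nonzero members have at most `s` zeros embeds into `B / P ^ (s+1)`. -/
theorem finite_and_finrank_le {P : Ideal B} [P.IsPrime] (hP : P ≠ ⊥)
    (hres : ∀ b : B, ∃ c : k, b - algebraMap k B c ∈ P) (A : Submodule k B) (s : ℕ)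
    (hA : ∀ a ∈ A, (Algebra.norm k[X] a).natDegree ≤ s) :
    Finite A ∧ Module.finrank k A ≤ s + 1 := by
  have hc := card_quot_pow hP hres (s + 1)
  have : Finite (B ⧸ P ^ (s + 1)) := Nat.finite_of_card_ne_zero (by rw [hc]; positivity)
  let f : A → B ⧸ P ^ (s + 1) := fun a => Ideal.Quotient.mk _ a.1
  have hf : Function.Injective f := by
    intro a b hab
    by_contra hne
    have h0 : a.1 - b.1 ≠ 0 := fun h => hne (Subtype.ext (sub_eq_zero.1 h))
    have h1 := le_natDegree_norm hP hres h0 ((Ideal.Quotient.mk_eq_mk_iff_sub_mem _ _).1 hab)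
    have h2 := hA _ (A.sub_mem a.2 b.2)
    omega
  have hfin : Finite A := Finite.of_injective f hf
  refine ⟨hfin, ?_⟩
  have h3 := Nat.card_le_card_of_injective f hf
  rw [hc, Module.natCard_eq_pow_finrank (K := k), Nat.card_eq_fintype_card] at h3
  exact (Nat.pow_le_pow_iff_right Fintype.one_lt_card).1 h3

/-- The Stepanov–Bombieri estimate.  Let `B` be a finite extension of `k[t]` of degree `n` filtered by
spaces `A m` (functions with poles of order at most `m` above infinity) that satisfy the
dimension bounds `hnorm` and `hdim`, and let `P` be a rational point.  Write `Q = |k|` as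
`p ^ μ * q`.  Then the number of points `ψ` whose `Q`-Frobenius equals the automorphism `γ`, i.e.
`ψ x ^ Q = ψ (γ x)`, is bounded by the number of zeros of one auxiliary function
`Φ = ∑ w i * (v i) ^ q` with `w i ∈ A (m + c)` and `v i ∈ A (κ + c)`.  The `w i` are chosen, by
counting dimensions, with `∑ (w i) ^ (p ^ μ) * γ (v i) = 0`; this is `Φ ^ (p ^ μ)` at such a point. -/
theorem stepanov_bound (n c : ℕ) (A : ℕ → Submodule k B) (hone : (1 : B) ∈ A 0)
    (hmul : ∀ m l, ∀ a ∈ A m, ∀ b ∈ A l, a * b ∈ A (m + l))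
    (hnorm : ∀ m, ∀ a ∈ A m, (Algebra.norm k[X] a).natDegree ≤ n * m)
    (hdim : ∀ m, n * m ≤ Module.finrank k (A (m + c)))
    (γ : B →ₐ[k] B) (hγ : ∀ m, ∀ a ∈ A m, γ a ∈ A m)
    {P : Ideal B} [P.IsPrime] (hP : P ≠ ⊥)
    (hres : ∀ b : B, ∃ c : k, b - algebraMap k B c ∈ P)
    (p : ℕ) [Fact p.Prime] [CharP k p] (μ q m κ : ℕ) (hQ : Fintype.card k = p ^ μ * q)
    (hq : n * (m + c) < q)
    (hcount : n * (p ^ μ * (m + c) + (κ + c)) + 1 < n * m * (n * κ))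
    {Ω : Type*} [Field Ω] [Algebra k Ω] (T : Finset (B →ₐ[k] Ω))
    (hT : ∀ ψ ∈ T, ∀ x, ψ x ^ Fintype.card k = ψ (γ x)) :
    T.card ≤ n * ((m + c) + (κ + c) * q) := by
  classical
  have hpow : ∀ m, ∀ a ∈ A m, ∀ s : ℕ, a ^ s ∈ A (s * m) := by
    intro m a ha s
    induction s with
    | zero => simpa using hone
    | succ s ih => rw [pow_succ, Nat.succ_mul]; exact hmul _ _ _ ih _ ha
  have hfin := fun m => finite_and_finrank_le hP hres (A m) (n * m) (hnorm m)
  have : CharP B p := charP_of_injective_algebraMap (algebraMap k B).injective p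
  set M := p ^ μ * (m + c) + (κ + c) with hM
  set r := Module.finrank k (A (κ + c)) with hr
  -- a basis of `A (κ + c)` with distinct vanishing orders `o i` at `P`
  obtain ⟨v, o, ho, -, hv⟩ := exists_echelon hP hres r (A (κ + c))
    (fun a ha ha0 => ⟨n * (κ + c) + 1, fun hmem => by
      have h1 := le_natDegree_norm hP hres ha0 hmem
      have h2 := hnorm _ _ ha
      omega⟩) rfl 0 (fun a _ => by simp)
  -- the source of `L` has more elements than its target, so `L` is not injective
  let L : (Fin r → A (m + c)) → A M := fun u =>
    ⟨∑ i, (u i).1 ^ p ^ μ * γ (v i), Submodule.sum_mem _ fun i _ =>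
      hmul _ _ _ (hpow _ _ (u i).2 _) _ (hγ _ _ (hv i).1)⟩
  have hL : ¬ Function.Injective L := by
    intro hinj
    have := (hfin M).1
    have := (hfin (m + c)).1
    have h3 := Nat.card_le_card_of_injective L hinj
    rw [Nat.card_fun, Nat.card_eq_fintype_card (α := Fin r), Fintype.card_fin,
      Module.natCard_eq_pow_finrank (K := k), Module.natCard_eq_pow_finrank (K := k) (V := A M),
      Nat.card_eq_fintype_card, ← pow_mul] at h3
    have h4 := (Nat.pow_le_pow_iff_right Fintype.one_lt_card).1 h3
    have h5 := Nat.mul_le_mul (hdim m) (hdim κ)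
    rw [← hr] at h5
    have h6 := (hfin M).2
    omega
  obtain ⟨u, u', huu, hne⟩ : ∃ u u', L u = L u' ∧ u ≠ u' := by
    simpa [Function.Injective] using hL
  let w : Fin r → B := fun i => (u i).1 - (u' i).1
  have hw : ∀ i, w i ∈ A (m + c) := fun i => (A _).sub_mem (u i).2 (u' i).2
  have hw0 : ∃ i, w i ≠ 0 := by
    by_contra hcon
    push Not at hcon
    exact hne (funext fun i => Subtype.ext (sub_eq_zero.1 (hcon i)))
  have hsum : ∑ i, w i ^ p ^ μ * γ (v i) = 0 := by
    have h1 : ∑ i, (u i).1 ^ p ^ μ * γ (v i) = ∑ i, (u' i).1 ^ p ^ μ * γ (v i) :=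
      congrArg Subtype.val huu
    simp only [w, sub_pow_char_pow, sub_mul, Finset.sum_sub_distrib, h1, sub_self]
  set Φ := ∑ i, w i * v i ^ q with hΦ
  have hΦmem : Φ ∈ A ((m + c) + (κ + c) * q) := by
    refine Submodule.sum_mem _ fun i _ => hmul _ _ _ (hw i) _ ?_
    rw [mul_comm]
    exact hpow _ _ (hv i).1 _
  -- The orders of the `(v i) ^ q` at `P` differ by at least `q`, while a non-zero `w i` vanishes to
  -- order less than `q`; hence the term with the smallest index `i` such that `w i ≠ 0` is not
  -- cancelled by the others.
  have hΦ0 : Φ ≠ 0 := by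
    intro h0
    let s : Finset (Fin r) := Finset.univ.filter fun i => w i ≠ 0
    have hs : s.Nonempty := by
      obtain ⟨i, hi⟩ := hw0
      exact ⟨i, by simp [s, hi]⟩
    set i := s.min' hs with hi
    have hi0 : w i ≠ 0 := by
      have := s.min'_mem hs
      simpa [s] using this
    have hlt : ∀ j, j < i → w j = 0 := by
      intro j hj
      by_contra hcon
      exact absurd (s.min'_le j (by simp [s, hcon])) (not_le.2 hj)
    have h1 : v i ^ q * w i ∈ P ^ (o i * q + q) := by
      have h2 : v i ^ q * w i = - ∑ j ∈ Finset.univ.erase i, w j * v j ^ q := by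
        rw [eq_neg_iff_add_eq_zero, mul_comm,
          Finset.add_sum_erase _ (fun j => w j * v j ^ q) (Finset.mem_univ i)]
        exact h0
      rw [h2]
      refine (P ^ (o i * q + q)).neg_mem (Submodule.sum_mem _ fun j hj => ?_)
      rcases lt_or_gt_of_ne (Finset.ne_of_mem_erase hj) with hji | hji
      · rw [hlt j hji]; simp
      · refine Ideal.mul_mem_left _ _ ?_
        have h3 := (pow_notMem_pow hP (hv j).2.1 (hv j).2.2 q).1
        refine Ideal.pow_le_pow_right ?_ h3
        have := Nat.mul_le_mul_right q (Nat.succ_le_of_lt (ho hji))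
        rw [Nat.succ_mul] at this
        exact this
    have h4 := pow_notMem_pow hP (hv i).2.1 (hv i).2.2 q
    have h5 := mem_pow_of_mul_mem hP h4.1 h4.2 h1
    have h6 := le_natDegree_norm hP hres hi0 h5
    have h7 := hnorm _ _ (hw i)
    omega
  refine (card_homs_le hΦ0 T fun ψ hψ => ?_).trans (hnorm _ _ hΦmem)
  have : CharP Ω p := charP_of_injective_algebraMap (algebraMap k Ω).injective p
  -- `ψ (v i) ^ (q * p ^ μ) = ψ (v i) ^ Q = ψ (γ (v i))`
  have h1 : ψ Φ ^ p ^ μ = 0 := by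
    have h2 : ψ (∑ i, w i ^ p ^ μ * γ (v i)) = 0 := by rw [hsum, map_zero]
    rw [← h2, hΦ, map_sum, map_sum, sum_pow_char_pow]
    refine Finset.sum_congr rfl fun i _ => ?_
    rw [map_mul, map_mul, map_pow, map_pow, ← hT ψ hψ, hQ, mul_pow, ← pow_mul, mul_comm q]
  exact eq_zero_of_pow_eq_zero h1

end Stepanov2

/-- Choice of the parameters in the Stepanov argument: for `ε = 1/(4n)` the bound it yields is
`(1 + ε) Q` as soon as `Q` is large. -/
theorem stepanov_params (n c p : ℕ) (hn : 0 < n) (hp : p.Prime) :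
    ∃ Q₀, ∀ s, Q₀ ≤ p ^ s → ∃ μ q m κ : ℕ, p ^ s = p ^ μ * q ∧ n * (m + c) < q ∧
      n * (p ^ μ * (m + c) + (κ + c)) + 1 < n * m * (n * κ) ∧
      4 * n * (n * ((m + c) + (κ + c) * q)) ≤ (4 * n + 1) * p ^ s := by
  -- `p ^ μ = R` is a constant, and `K = κ + c` is about `R / n * (1 + 1 / (8 n))`: slightly more than
  -- the value `R / n` at which the number of unknowns exceeds the number of equations.
  set μ := 8 * n * (1 + n + n * c) with hμ
  set R := p ^ μ with hR
  have hRμ : μ < R := Nat.lt_pow_self hp.one_lt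
  have hRpos : 0 < R := by omega
  set K := (8 * n + 1) * R / (8 * n ^ 2) with hK
  have hn2 : 0 < 8 * n ^ 2 := by positivity
  have hK1 : 8 * n ^ 2 * K ≤ (8 * n + 1) * R := Nat.mul_div_le _ _
  have hK2 : (8 * n + 1) * R < 8 * n ^ 2 * (K + 1) := by
    rw [mul_comm (8 * n ^ 2)]; exact Nat.lt_mul_of_div_lt (Nat.lt_succ_self _) hn2
  have hcK : R + 1 + n * c ≤ n * K := by
    have h1 : 8 * n * (R + (1 + n + n * c)) ≤ 8 * n * (n * (K + 1)) := by nlinarith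
    have h2 := Nat.le_of_mul_le_mul_left h1 (by positivity)
    linarith
  have hcK' : c ≤ K := by
    have : n * c ≤ n * K := by omega
    exact Nat.le_of_mul_le_mul_left this hn
  obtain ⟨κ, hκ⟩ := Nat.exists_eq_add_of_le' hcK'
  set m := R * c + (κ + c) + 2 with hm
  refine ⟨R * (8 * n ^ 2 * (m + c) + n * (m + c) + 1), fun s hs => ?_⟩
  have hμs : μ ≤ s := by
    have h1 : R * 1 ≤ p ^ s := le_trans (Nat.mul_le_mul_left _ (by omega)) hs
    rw [mul_one] at h1
    exact (Nat.pow_le_pow_iff_right hp.one_lt).1 h1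
  have hQ : p ^ s = R * p ^ (s - μ) := by rw [hR, ← pow_add]; congr 1; omega
  set q := p ^ (s - μ)
  rw [hQ] at hs
  have hq := Nat.le_of_mul_le_mul_left hs hRpos
  refine ⟨μ, q, m, κ, hQ, by omega, ?_, ?_⟩
  · have h1 : R + 1 ≤ n * κ := by rw [hκ, mul_add] at hcK; omega
    calc n * (R * (m + c) + (κ + c)) + 1 < n * m * (R + 1) := by rw [hm]; nlinarith
      _ ≤ _ := Nat.mul_le_mul_left _ h1
  · rw [hQ, ← hκ]
    have h1 : 8 * n ^ 2 * (m + c) ≤ R * q := by nlinarith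
    have h2 := Nat.mul_le_mul_right q hK1
    nlinarith

end

/-! ### Poles at infinity -/

section

open Polynomial
open scoped Pointwise

section Poles

open Classical in
/-- The valuation ring of `k(t)` at infinity. -/
noncomputable def infRing (k : Type*) [Field k] : ValuationSubring (RatFunc k) :=
  (RatFunc.inftyValuation k).valuationSubring

section
variable {k : Type*} [Field k]

/-- The polynomials with pole of order at most `m` at infinity are those of degree at most `m`. -/
theorem algebraMap_mem_infRing_iff (p : k[X]) (m : ℕ) :
    (RatFunc.X : RatFunc k)⁻¹ ^ m * algebraMap k[X] (RatFunc k) p ∈ infRing k ↔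
      p.natDegree ≤ m := by
  classical
  change RatFunc.inftyValuation k _ ≤ 1 ↔ _
  by_cases hp : p = 0
  · simp [hp]
  · have h1 : RatFunc.inftyValuation k (algebraMap k[X] (RatFunc k) p)
        = WithZero.exp (p.natDegree : ℤ) := by
      exact RatFunc.inftyValuation.polynomial k hp
    rw [map_mul, map_pow, map_inv₀, h1, RatFunc.inftyValuation.X, ← WithZero.exp_neg,
      ← WithZero.exp_nsmul, ← WithZero.exp_add, ← WithZero.exp_zero, WithZero.exp_le_exp]
    simp

end

variable (k : Type*) [Field k] (L : Type*) [Field L] [Algebra k L] [Algebra k[X] L]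
  [Algebra (RatFunc k) L] [IsScalarTower k k[X] L] [IsScalarTower k[X] (RatFunc k) L]

/-- The functions integral away from infinity with poles of order at most `m` (relative to the
parameter `t`) above infinity. -/
noncomputable def poleSpace (m : ℕ) : Submodule k (integralClosure k[X] L) where
  carrier := {u | IsIntegral (infRing k) (algebraMap (RatFunc k) L (RatFunc.X⁻¹ ^ m) * (u : L))}
  add_mem' {a b} ha hb := by
    have := IsIntegral.add ha hb
    rw [← mul_add] at this
    exact this
  zero_mem' := by simp [isIntegral_zero]
  smul_mem' c u hu := by
    have h1 : algebraMap k[X] (RatFunc k) (C c) ∈ infRing k := by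
      have := (algebraMap_mem_infRing_iff (C c) 0).2 (by simp)
      simpa using this
    have h2 : IsIntegral (infRing k) (algebraMap (infRing k) L ⟨_, h1⟩) := isIntegral_algebraMap
    have h3 := IsIntegral.mul h2 hu
    change IsIntegral (infRing k) _
    refine Eq.mpr (congrArg (IsIntegral (infRing k)) ?_) h3
    have h4 : algebraMap (infRing k) L ⟨_, h1⟩ = algebraMap k L c := by
      rw [IsScalarTower.algebraMap_apply (infRing k) (RatFunc k) L]
      change algebraMap (RatFunc k) L (algebraMap k[X] (RatFunc k) (C c)) = _
      rw [← IsScalarTower.algebraMap_apply k[X] (RatFunc k) L,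
        IsScalarTower.algebraMap_apply k k[X] L]
      rfl
    rw [h4, mul_left_comm]
    congr 1
    exact Algebra.smul_def c (u : L)

variable {k L}

theorem mem_poleSpace {m : ℕ} {u : integralClosure k[X] L} : u ∈ poleSpace k L m ↔
    IsIntegral (infRing k) (algebraMap (RatFunc k) L (RatFunc.X⁻¹ ^ m) * (u : L)) := Iff.rfl

theorem one_mem_poleSpace : (1 : integralClosure k[X] L) ∈ poleSpace k L 0 := by
  simp [mem_poleSpace, isIntegral_one]

theorem mul_mem_poleSpace {m l : ℕ} {a b : integralClosure k[X] L} (ha : a ∈ poleSpace k L m)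
    (hb : b ∈ poleSpace k L l) : a * b ∈ poleSpace k L (m + l) := by
  have := IsIntegral.mul ha hb
  rw [mem_poleSpace]
  refine Eq.mpr (congrArg (IsIntegral (infRing k)) ?_) this
  rw [pow_add, map_mul]
  push_cast
  ring

theorem isIntegral_infRing_algebraMap {y : RatFunc k} (hy : y ∈ infRing k) :
    IsIntegral (infRing k) (algebraMap (RatFunc k) L y) := by
  have : IsIntegral (infRing k) (algebraMap (infRing k) L ⟨y, hy⟩) := isIntegral_algebraMap
  rwa [IsScalarTower.algebraMap_apply (infRing k) (RatFunc k) L] at this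

theorem poly_smul_mem_poleSpace {m l : ℕ} {p : k[X]} (hp : p.natDegree ≤ l)
    {a : integralClosure k[X] L} (ha : a ∈ poleSpace k L m) : p • a ∈ poleSpace k L (l + m) := by
  have h1 := isIntegral_infRing_algebraMap (L := L) ((algebraMap_mem_infRing_iff p l).2 hp)
  have := IsIntegral.mul h1 ha
  rw [mem_poleSpace]
  refine Eq.mpr (congrArg (IsIntegral (infRing k)) ?_) this
  rw [pow_add, map_mul, map_mul, ← IsScalarTower.algebraMap_apply k[X] (RatFunc k) L]
  have : ((p • a : integralClosure k[X] L) : L) = algebraMap k[X] L p * a := by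
    rw [← Algebra.smul_def]; rfl
  rw [this]
  ring

theorem poleSpace_mono {m l : ℕ} (h : m ≤ l) : poleSpace k L m ≤ poleSpace k L l := by
  intro a ha
  obtain ⟨d, rfl⟩ := Nat.exists_eq_add_of_le' h
  have := poly_smul_mem_poleSpace (l := d) (p := 1) (by simp) ha
  simpa using this

theorem smul_mem_poleSpace {m : ℕ} {a : integralClosure k[X] L} (g : Gal(L/RatFunc k))
    (ha : a ∈ poleSpace k L m) : g • a ∈ poleSpace k L m := by
  rw [mem_poleSpace] at ha ⊢
  have := ha.map ((g : L →ₐ[RatFunc k] L).restrictScalars (infRing k))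
  refine Eq.mpr (congrArg (IsIntegral (infRing k)) ?_) this
  rw [AlgHom.restrictScalars_apply, map_mul]
  congr 1
  exact (g.commutes _).symm

/-- A function with poles of order at most `m` above infinity has at most `[L : k(t)] * m` zeros,
because its norm is a polynomial with a pole of that order at most. -/
theorem natDegree_norm_le [FiniteDimensional (RatFunc k) L]
    [Module.Free k[X] (integralClosure k[X] L)]
    [Module.Finite k[X] (integralClosure k[X] L)] {m : ℕ}
    {a : integralClosure k[X] L} (ha : a ∈ poleSpace k L m) :
    (Algebra.norm k[X] a).natDegree ≤ Module.finrank (RatFunc k) L * m := by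
  have h1 := Algebra.isIntegral_norm (RatFunc k) (mem_poleSpace.1 ha)
  rw [map_mul, Algebra.norm_algebraMap] at h1
  have := IsIntegralClosure.isLocalization k[X] (RatFunc k) L (integralClosure k[X] L)
  have h2 := Algebra.norm_localization k[X] (nonZeroDivisors k[X]) (Rₘ := RatFunc k) (Sₘ := L) a
  have h3 : algebraMap (integralClosure k[X] L) L a = (a : L) := rfl
  rw [h3] at h2
  rw [h2, ← pow_mul, mul_comm m] at h1
  obtain ⟨y, hy⟩ := IsIntegrallyClosed.algebraMap_eq_of_integral h1
  rw [← algebraMap_mem_infRing_iff, ← hy]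
  exact y.2

/-- A weak form of Riemann–Roch: multiplying `n` independent functions by polynomials of degree less
than `m` gives `n * m` independent functions. -/
theorem le_finrank_poleSpace {n c : ℕ} (e : Fin n → integralClosure k[X] L)
    (he : ∀ i, e i ∈ poleSpace k L c)
    (hli : LinearIndependent (RatFunc k) (fun i => (e i : L))) (m : ℕ)
    [Module.Finite k (poleSpace k L (m + c))] :
    n * m ≤ Module.finrank k (poleSpace k L (m + c)) := by
  let f : (Fin n → degreeLT k m) →ₗ[k] poleSpace k L (m + c) :=
    { toFun := fun p => ⟨∑ i, (p i).1 • e i, Submodule.sum_mem _ fun i _ =>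
        poly_smul_mem_poleSpace (by
          have := mem_degreeLT.1 (p i).2
          exact natDegree_le_of_degree_le this.le) (he i)⟩
      map_add' := fun p p' => by
        apply Subtype.ext; simp [add_smul, Finset.sum_add_distrib]
      map_smul' := fun c p => by
        apply Subtype.ext; simp [Finset.smul_sum] }
  have hf : Function.Injective f := by
    rw [injective_iff_map_eq_zero]
    intro p hp
    have h1 : ∑ i, (p i).1 • e i = 0 := congrArg Subtype.val hp
    have h2 : ∑ i, algebraMap k[X] (RatFunc k) (p i).1 • (e i : L) = 0 := by
      have := congrArg (Subtype.val) h1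
      rw [AddSubmonoidClass.coe_finsetSum] at this
      simpa [algebraMap_smul] using this
    have h3 := Fintype.linearIndependent_iff.1 hli _ h2
    funext i
    apply Subtype.ext
    exact (map_eq_zero_iff _ (IsFractionRing.injective k[X] (RatFunc k))).1 (h3 i)
  have := LinearMap.finrank_le_finrank_of_injective hf
  rw [Module.finrank_pi_fintype, (degreeLTEquiv k m).finrank_eq] at this
  simpa using this

/-- If `s` generates `L` and contains `1`, then `L` has a basis consisting of products of `[L : K]`
elements of `s`: the spaces spanned by products of `j` elements grow strictly until they are `L`. -/
theorem exists_basis_of_adjoin {K : Type*} [Field K] {L : Type*} [Field L] [Algebra K L]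
    [FiniteDimensional K L] (s : Set L) (h1 : 1 ∈ s)
    (hs : Algebra.adjoin K s = ⊤) :
    ∃ e : Fin (Module.finrank K L) → L, LinearIndependent K e ∧
      ∀ i, e i ∈ s ^ Module.finrank K L := by
  set M := Submodule.span K s with hM
  have h1M : 1 ≤ M := by
    rw [Submodule.one_le]; exact Submodule.subset_span h1
  have key : ∀ j, M ^ j = ⊤ ∨ j + 1 ≤ Module.finrank K ↥(M ^ j) := by
    intro j
    induction j with
    | zero =>
      right
      rw [pow_zero, zero_add, Submodule.one_eq_span, finrank_span_singleton one_ne_zero]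
    | succ j ih =>
      have hle : M ^ j ≤ M ^ (j + 1) := by
        calc M ^ j = M ^ j * 1 := (mul_one _).symm
          _ ≤ M ^ j * M := mul_le_mul_right h1M _
          _ = _ := (pow_succ _ _).symm
      rcases ih with ih | ih
      · left; rw [ih] at hle; exact top_le_iff.1 hle
      · by_cases heq : M ^ j = M ^ (j + 1)
        · left
          rw [← heq, eq_top_iff]
          intro x _
          have hx : x ∈ Algebra.adjoin K s := by rw [hs]; trivial
          have hmulmem : ∀ y ∈ M ^ j, y * x ∈ M ^ j := by
            induction hx using Algebra.adjoin_induction with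
            | mem x hx =>
              intro y hy
              rw [heq, pow_succ]
              exact Submodule.mul_mem_mul hy (Submodule.subset_span hx)
            | algebraMap r =>
              intro y hy
              rw [mul_comm, ← Algebra.smul_def]
              exact Submodule.smul_mem _ _ hy
            | add a b _ _ iha ihb =>
              intro y hy
              rw [mul_add]
              exact Submodule.add_mem _ (iha trivial y hy) (ihb trivial y hy)
            | mul a b _ _ iha ihb =>
              intro y hy
              rw [← mul_assoc]
              exact ihb trivial _ (iha trivial y hy)
          have h1j : (1 : L) ∈ M ^ j := Submodule.one_le.1 (one_le_pow₀ h1M)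
          simpa using hmulmem 1 h1j
        · right
          have := Submodule.finrank_lt_finrank_of_lt (lt_of_le_of_ne hle heq)
          omega
  have htop : M ^ Module.finrank K L = ⊤ := by
    refine (key _).resolve_right fun h => ?_
    have := Submodule.finrank_le (M ^ Module.finrank K L)
    omega
  rw [hM, Submodule.span_pow] at htop
  obtain ⟨f, hf, -, hli⟩ := Submodule.exists_fun_fin_finrank_span_eq K (s ^ Module.finrank K L)
  have hn : Module.finrank K (Submodule.span K (s ^ Module.finrank K L)) = Module.finrank K L := by
    rw [htop, finrank_top]
  exact ⟨f ∘ Fin.cast hn.symm, hli.comp _ (Fin.cast_injective _), fun i => hf _⟩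

end Poles

end

/-! ### Points above a given parameter and their Frobenius -/

section

open Polynomial
open scoped Pointwise

section Homs

variable {k : Type*} [Field k] [Fintype k]

/-- In an extension field, the elements fixed by the Frobenius of `k` are those of `k`. -/
theorem exists_of_pow_card_eq {Ω : Type*} [Field Ω] [Algebra k Ω] {x : Ω}
    (hx : x ^ Fintype.card k = x) : ∃ c : k, algebraMap k Ω c = x := by
  classical
  have hne := FiniteField.X_pow_card_sub_X_ne_zero k (p := Fintype.card k) Fintype.one_lt_card
  have h1 : (X ^ Fintype.card k - X : k[X]).Splits := by
    rw [splits_iff_card_roots, FiniteField.roots_X_pow_card_sub_X,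
      FiniteField.X_pow_card_sub_X_natDegree_eq k Fintype.one_lt_card]
    rfl
  exact h1.mem_range_of_isRoot hne (by simp [hx])

variable {B : Type*} [CommRing B] [IsDedekindDomain B] [Algebra k[X] B] [Algebra k B]
  [IsScalarTower k k[X] B] [Module.Free k[X] B] [Module.Finite k[X] B]

/-- Above every `t : k` lies a geometric point `φ` of `B`, and its Frobenius is induced by some
element `g` of the group `G` with invariants `k[t]`. -/
theorem exists_hom_frob (hinj : Function.Injective (algebraMap k[X] B))
    (G : Type*) [Group G] [Finite G] [MulSemiringAction G B]
    [SMulCommClass G k[X] B] [Algebra.IsInvariant k[X] B G] (t : k) :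
    ∃ (φ : B →ₐ[k] AlgebraicClosure k) (g : G),
      (∀ q : k[X], φ (algebraMap k[X] B q) = algebraMap k (AlgebraicClosure k) (q.eval t)) ∧
      ∀ x, φ x ^ Fintype.card k = φ (g • x) := by
  have hBint : Algebra.IsIntegral k[X] B := Algebra.IsIntegral.of_finite _ _
  set P₀ : Ideal k[X] := RingHom.ker (evalRingHom t) with hP₀
  have hsurj : Function.Surjective (evalRingHom t) := fun c => ⟨C c, by simp⟩
  have hmax : P₀.IsMaximal := RingHom.ker_isMaximal_of_surjective _ hsurj
  obtain ⟨𝔮, h𝔮max, h𝔮⟩ := Ideal.exists_ideal_over_maximal_of_isIntegral (S := B) P₀ (by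
    rw [(RingHom.injective_iff_ker_eq_bot _).1 hinj]; exact bot_le)
  let : Field (B ⧸ 𝔮) := Ideal.Quotient.field 𝔮
  have hval : ∀ q : k[X], algebraMap k[X] (B ⧸ 𝔮) q = algebraMap k (B ⧸ 𝔮) (q.eval t) := by
    intro q
    have h1 : q - C (q.eval t) ∈ 𝔮.comap (algebraMap k[X] B) := by
      rw [h𝔮]; simp [hP₀, RingHom.mem_ker]
    rw [Ideal.mem_comap, map_sub, ← Ideal.Quotient.eq] at h1
    rw [IsScalarTower.algebraMap_apply k[X] B (B ⧸ 𝔮), IsScalarTower.algebraMap_apply k B (B ⧸ 𝔮),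
      IsScalarTower.algebraMap_apply k k[X] B]
    exact h1
  have halg : Algebra.IsIntegral k (B ⧸ 𝔮) := by
    have h1 : (algebraMap k[X] (B ⧸ 𝔮)).IsIntegral := by
      have : Algebra.IsIntegral k[X] (B ⧸ 𝔮) := inferInstance
      exact algebraMap_isIntegral_iff.2 this
    have h2 : algebraMap k[X] (B ⧸ 𝔮) = (algebraMap k (B ⧸ 𝔮)).comp (evalRingHom t) :=
      RingHom.ext hval
    rw [h2] at h1
    exact algebraMap_isIntegral_iff.1 (h1.tower_top)
  let ι : (B ⧸ 𝔮) →ₐ[k] AlgebraicClosure k :=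
    haveI : Algebra.IsAlgebraic k (B ⧸ 𝔮) := Algebra.IsIntegral.isAlgebraic
    IsAlgClosed.lift
  let φ : B →ₐ[k] AlgebraicClosure k := ι.comp (Ideal.Quotient.mkₐ k 𝔮)
  have hφ : ∀ x, φ x = ι (Ideal.Quotient.mk 𝔮 x) := fun x => rfl
  have hfin : Finite (B ⧸ 𝔮) := by
    have hu0 : algebraMap k[X] B (X - C t) ≠ 0 := by
      rw [Ne, map_eq_zero_iff _ hinj]; exact X_sub_C_ne_zero t
    have hu : Ideal.span {algebraMap k[X] B (X - C t)} ≤ 𝔮 := by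
      rw [Ideal.span_singleton_le_iff_mem, ← Ideal.mem_comap, h𝔮]
      simp [hP₀, RingHom.mem_ker]
    have := finite_quot_span (k := k) hu0
    have : Finite (B ⧸ Ideal.span {algebraMap k[X] B (X - C t)}) := Module.finite_of_finite k
    exact Finite.of_surjective _ (Ideal.Quotient.factor_surjective hu)
  obtain ⟨g, hg⟩ := IsArithFrobAt.exists_of_isInvariant k[X] G 𝔮
  have hcard : Nat.card (k[X] ⧸ 𝔮.under k[X]) = Fintype.card k := by
    have h1 : 𝔮.under k[X] = P₀ := h𝔮
    rw [h1, ← Nat.card_eq_fintype_card]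
    exact Nat.card_congr (RingHom.quotientKerEquivOfSurjective hsurj).toEquiv
  refine ⟨φ, g, fun q => ?_, fun x => ?_⟩
  · rw [hφ, ← ι.commutes, ← hval]
    rfl
  · have h1 := hg x
    rw [hcard, ← Ideal.Quotient.eq] at h1
    rw [hφ, hφ, ← map_pow, ← map_pow]
    exact congrArg ι h1.symm

/-- Where the discriminant `Δ` does not vanish, distinct roots specialise to distinct elements. -/
theorem root_sub_ne_zero {R B Ω : Type*} [CommRing R] [CommRing B] [IsDomain B] [Algebra R B]
    [CommRing Ω] (f a b : R[X]) (Δ : R) (hab : a * f + b * derivative f = C Δ)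
    (φ : B →+* Ω) (hφ : φ (algebraMap R B Δ) ≠ 0) {θ θ' : B} (hθ : aeval θ f = 0)
    (hθ' : aeval θ' f = 0) (hne : θ ≠ θ') : φ θ ≠ φ θ' := by
  set F := f.map (algebraMap R B) with hF
  have h1 : F.IsRoot θ := by rw [IsRoot, hF, eval_map_algebraMap, hθ]
  have h1' : F.IsRoot θ' := by rw [IsRoot, hF, eval_map_algebraMap, hθ']
  obtain ⟨h, hh⟩ := dvd_iff_isRoot.2 h1
  have h2 : h.eval θ' = 0 := by
    rw [IsRoot, hh, eval_mul, mul_eq_zero] at h1'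
    refine h1'.resolve_left ?_
    simpa using sub_ne_zero.2 hne.symm
  have h3 : aeval θ' (derivative f) = (θ' - θ) * (derivative h).eval θ' := by
    rw [← eval_map_algebraMap, ← derivative_map, ← hF, hh, derivative_mul]
    simp [h2]
  have h4 := congrArg (aeval θ') hab
  rw [map_add, map_mul, map_mul, hθ', h3, aeval_C, mul_zero, zero_add] at h4
  intro heq
  apply hφ
  rw [← h4, map_mul, map_mul, map_sub, heq]
  simp

end Homs

section Roots

variable {k : Type*} [Field k] {L : Type*} [Field L] [Algebra k L] [Algebra k[X] L]
  [Algebra (RatFunc k) L] [IsScalarTower k k[X] L] [IsScalarTower k[X] (RatFunc k) L]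

/-- The roots of `f` have poles of order at most the degree of the coefficients, because `t⁻¹ ^ c`
times a root satisfies a monic equation over the valuation ring at infinity. -/
theorem root_mem_poleSpace {f : k[X][X]} (hf : f.Monic) {c : ℕ}
    (hc : ∀ i, (f.coeff i).natDegree ≤ c) (θ : integralClosure k[X] L)
    (hθ : aeval (θ : L) f = 0) : θ ∈ poleSpace k L c := by
  set fK := f.map (algebraMap k[X] (RatFunc k)) with hfK
  have hmon : fK.Monic := hf.map _
  have hdeg : fK.natDegree = f.natDegree := hf.natDegree_map _
  have hθK : aeval (θ : L) fK = 0 := by rw [hfK, aeval_map_algebraMap, hθ]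
  set s := (RatFunc.X : RatFunc k)⁻¹ ^ c with hs
  have h1 : aeval (algebraMap (RatFunc k) L s * (θ : L)) (scaleRoots fK s) = 0 :=
    scaleRoots_aeval_eq_zero hθK
  have h2 : (scaleRoots fK s).Monic := (monic_scaleRoots_iff s).2 hmon
  have h3 : scaleRoots fK s ∈ lifts (algebraMap (infRing k) (RatFunc k)) := by
    rw [lifts_iff_coeff_lifts]
    intro i
    suffices h : (scaleRoots fK s).coeff i ∈ infRing k from ⟨⟨_, h⟩, rfl⟩
    rw [coeff_scaleRoots, hdeg]
    rcases lt_trichotomy i f.natDegree with hi | hi | hi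
    · rw [hfK, coeff_map, hs, ← pow_mul, mul_comm, algebraMap_mem_infRing_iff]
      exact (hc i).trans (Nat.le_mul_of_pos_right _ (by omega))
    · rw [hi, ← hdeg, coeff_natDegree, hmon.leadingCoeff]
      simp
    · rw [coeff_eq_zero_of_natDegree_lt (by omega), zero_mul]
      exact (infRing k).zero_mem
  obtain ⟨g, hg, -, hgm⟩ := lifts_and_natDegree_eq_and_monic h3 h2
  refine ⟨g, hgm, ?_⟩
  rw [← hg, aeval_map_algebraMap] at h1
  exact h1

theorem pow_mem_poleSpace {s : Set L} {c : ℕ}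
    (hs : ∀ x ∈ s, ∃ b ∈ poleSpace k L c, (b : L) = x) (n : ℕ) :
    ∀ x ∈ s ^ n, ∃ b ∈ poleSpace k L (n * c), (b : L) = x := by
  induction n with
  | zero =>
    intro x hx
    rw [pow_zero, Set.mem_one] at hx
    exact ⟨1, by rw [zero_mul]; exact one_mem_poleSpace, by simp [hx]⟩
  | succ n ih =>
    intro x hx
    rw [pow_succ] at hx
    obtain ⟨y, hy, z, hz, rfl⟩ := Set.mem_mul.1 hx
    obtain ⟨b, hb, rfl⟩ := ih y hy
    obtain ⟨b', hb', rfl⟩ := hs z hz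
    exact ⟨b * b', by rw [Nat.succ_mul]; exact mul_mem_poleSpace hb hb', rfl⟩

end Roots

end

/-! ### Counting points on curves -/

section

open Polynomial
open scoped Pointwise

section Curve

variable {k : Type*} [Field k] [Fintype k] {L : Type*} [Field L] [Algebra k L] [Algebra k[X] L]
  [Algebra (RatFunc k) L] [IsScalarTower k k[X] L] [IsScalarTower k[X] (RatFunc k) L]
  [FiniteDimensional (RatFunc k) L] [IsGalois (RatFunc k) L]

theorem isInvariant_integralClosure :
    Algebra.IsInvariant k[X] (integralClosure k[X] L) Gal(L/RatFunc k) := by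
  refine ⟨fun b hb => ?_⟩
  have h1 : (b : L) ∈ Set.range (algebraMap (RatFunc k) L) := by
    rw [IsGalois.mem_range_algebraMap_iff_fixed]
    intro g
    exact congrArg Subtype.val (hb g)
  obtain ⟨y, hy⟩ := h1
  have h2 : IsIntegral k[X] y := by
    have := b.2
    rw [mem_integralClosure_iff, ← hy] at this
    exact (isIntegral_algebraMap_iff (algebraMap (RatFunc k) L).injective).1 this
  obtain ⟨q, hq⟩ := IsIntegrallyClosed.algebraMap_eq_of_integral h2
  refine ⟨q, Subtype.ext ?_⟩
  rw [← hy, ← hq, ← IsScalarTower.algebraMap_apply]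
  rfl

/-- The counting argument for the plane curve `f(t, T) = 0` with splitting field `L` of degree `n`.
For each automorphism `γ` the points of `L` above the good `t` with Frobenius `γ` number at most
`(1 + 1/(4n)) Q` by `stepanov_bound`, where `Q = |k|`.  There are about `n Q` points in all and `n`
automorphisms, so the trivial automorphism gets a positive proportion; its points lie above those
`t` for which `f(t, T)` has all its roots in `k`. -/
theorem curve_aux (f a b : k[X][X]) (Δ : k[X]) (hf : f.Monic) (hD : 0 < f.natDegree)
    (c : ℕ) (hc : ∀ i, (f.coeff i).natDegree ≤ c) (hΔc : Δ.natDegree ≤ c)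
    (hab : a * f + b * derivative f = C Δ) (hΔ0 : Δ.eval 0 ≠ 0)
    (hsplit : (f.map (evalRingHom 0)).Splits)
    [(f.map (algebraMap k[X] (RatFunc k))).IsSplittingField (RatFunc k) L]
    (p : ℕ) [Fact p.Prime] [CharP k p] (μ q m κ n : ℕ)
    (hn : n = Module.finrank (RatFunc k) L)
    (hQ : Fintype.card k = p ^ μ * q)
    (hq : n * (m + n * c) < q)
    (hcount : n * (p ^ μ * (m + n * c) + (κ + n * c)) + 1 < n * m * (n * κ))
    (hbound : 4 * n * (n * ((m + n * c) + (κ + n * c) * q)) ≤ (4 * n + 1) * Fintype.card k)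
    (hbig : 4 * n * c ≤ Fintype.card k) :
    Fintype.card k ≤ 2 * n *
      Nat.card {t : k // Δ.eval t ≠ 0 ∧ ∃ τ, (f.map (evalRingHom t)).IsRoot τ} := by
  classical
  set K := RatFunc k with hK
  set B := integralClosure k[X] L with hB
  set G := Gal(L/K) with hG
  set fK := f.map (algebraMap k[X] K) with hfK
  have : IsDedekindDomain B := integralClosure.isDedekindDomain k[X] K L
  have : Module.IsTorsionFree k[X] L := Module.IsTorsionFree.trans_faithfulSMul k[X] K L
  have : Module.Free k[X] B := IsIntegralClosure.module_free k[X] K L B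
  have : Module.Finite k[X] B := IsIntegralClosure.finite k[X] K L B
  have : Algebra.IsInvariant k[X] B G := isInvariant_integralClosure
  have hinj : Function.Injective (algebraMap k[X] B) := FaithfulSMul.algebraMap_injective _ _
  choose φ g hφ hg using exists_hom_frob (k := k) (B := B) hinj G
  set Ω := AlgebraicClosure k
  have hroot : ∀ θ ∈ fK.rootSet L, ∃ b : B, (b : L) = θ ∧ aeval b f = 0 := by
    intro θ hθ
    have h1 : aeval θ f = 0 := by
      have := aeval_eq_zero_of_mem_rootSet hθ
      rwa [hfK, aeval_map_algebraMap] at this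
    refine ⟨⟨θ, f, hf, h1⟩, rfl, ?_⟩
    apply Subtype.ext
    have := aeval_algebraMap_apply L (⟨θ, f, hf, h1⟩ : B) f
    exact this.symm.trans h1
  have hfix : ∀ h h' : G, (∀ b : B, aeval b f = 0 → h • b = h' • b) → h = h' := by
    intro h h' hh
    have h1 : (h : L →ₐ[K] L) = h' := by
      refine AlgHom.ext_of_adjoin_eq_top (IsSplittingField.adjoin_rootSet L fK) ?_
      intro θ hθ
      obtain ⟨b, rfl, hb⟩ := hroot θ hθ
      exact congrArg Subtype.val (hh b hb)
    exact AlgEquiv.coe_toAlgHom_injective h1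
  have hsmulroot : ∀ (h : G) (b : B), aeval b f = 0 → aeval (h • b) f = 0 := by
    intro h b hb
    have := aeval_algHom_apply (MulSemiringAction.toAlgHom k[X] B h) b f
    rw [hb, map_zero] at this
    exact this
  have hφinj : ∀ t : k, Δ.eval t ≠ 0 → ∀ b b' : B, aeval b f = 0 → aeval b' f = 0 →
      φ t b = φ t b' → b = b' := by
    intro t ht b b' hb hb' heq
    by_contra hne
    refine root_sub_ne_zero f a _ Δ hab (φ t).toRingHom ?_ hb hb' hne heq
    change φ t (algebraMap k[X] B Δ) ≠ 0
    rw [hφ]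
    simpa using ht
  have hφroot : ∀ (t : k) (b : B), aeval b f = 0 →
      aeval (φ t b) (f.map (evalRingHom t)) = 0 := by
    intro t b hb
    have h1 : (φ t).toRingHom.comp (algebraMap k[X] B) = (algebraMap k Ω).comp (evalRingHom t) :=
      RingHom.ext fun q => hφ t q
    have h2 : eval₂ ((φ t).toRingHom.comp (algebraMap k[X] B)) (φ t b) f = 0 := by
      have := congrArg (φ t) hb
      rw [map_zero, aeval_def] at this
      rw [← this]
      exact (hom_eval₂ f (algebraMap k[X] B) (φ t).toRingHom b).symm
    rw [aeval_def, eval₂_map, ← h1]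
    exact h2
  -- `f(0, T)` splits over `k`, so the Frobenius at `0` fixes all roots
  have hg0 : g 0 = 1 := by
    refine hfix _ _ fun b hb => ?_
    rw [one_smul]
    refine hφinj 0 hΔ0 _ _ (hsmulroot _ _ hb) hb ?_
    rw [← hg]
    obtain ⟨τ, hτ⟩ := hsplit.mem_range_of_isRoot (hf.map _).ne_zero
      (show ((f.map (evalRingHom 0)).map (algebraMap k Ω)).IsRoot (φ 0 b) by
        rw [IsRoot, eval_map_algebraMap]; exact hφroot 0 b hb)
    rw [← hτ, ← map_pow, FiniteField.pow_card]
  set P : Ideal B := RingHom.ker (φ 0) with hP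
  have hPprime : P.IsPrime := RingHom.ker_isPrime _
  have hPne : P ≠ ⊥ := by
    intro h
    have h1 : algebraMap k[X] B X ∈ P := by rw [hP, RingHom.mem_ker, hφ]; simp
    rw [h, Ideal.mem_bot, map_eq_zero_iff _ hinj] at h1
    exact X_ne_zero h1
  have hres : ∀ b : B, ∃ c : k, b - algebraMap k B c ∈ P := by
    intro b
    have h1 := hg 0 b
    rw [hg0, one_smul] at h1
    obtain ⟨c, hc⟩ := exists_of_pow_card_eq h1
    exact ⟨c, by rw [hP, RingHom.mem_ker, map_sub, AlgHom.commutes, hc, sub_self]⟩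
  -- `L` has a basis of functions with poles of order at most `n * c`, namely products of `n` roots
  obtain ⟨e, heli, hes⟩ := exists_basis_of_adjoin (K := K) (insert 1 (fK.rootSet L))
    (Set.mem_insert _ _) (by
      rw [eq_top_iff, ← IsSplittingField.adjoin_rootSet L fK]
      exact Algebra.adjoin_mono (Set.subset_insert _ _))
  have hgens : ∀ x ∈ insert 1 (fK.rootSet L), ∃ b ∈ poleSpace k L c, (b : L) = x := by
    rintro x (rfl | hx)
    · exact ⟨1, poleSpace_mono (Nat.zero_le _) one_mem_poleSpace, rfl⟩
    · obtain ⟨b, rfl, hb⟩ := hroot x hx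
      refine ⟨b, root_mem_poleSpace hf hc b ?_, rfl⟩
      have := aeval_algebraMap_apply L b f
      rw [hb, map_zero] at this
      exact this
  choose e' he' hee' using fun i => pow_mem_poleSpace hgens _ (e i) (hes i)
  have hdim : ∀ m, n * m ≤ Module.finrank k (poleSpace k L (m + n * c)) := by
    intro m
    have hfin := (finite_and_finrank_le hPne hres (poleSpace k L (m + n * c)) _
      (fun a ha => natDegree_norm_le ha)).1
    rw [hn]
    rw [hn] at hfin
    have : Module.Finite k (poleSpace k L (m + Module.finrank K L * c)) := Module.Finite.of_finite
    exact le_finrank_poleSpace e' he' (by simpa [hee'] using heli) m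
  have hnG : Nat.card G = n := by rw [hn]; exact IsGalois.card_aut_eq_finrank K L
  have hFG : Fintype G := Fintype.ofFinite G
  have hnG' : Fintype.card G = n := by rw [← Nat.card_eq_fintype_card, hnG]
  let good : Finset k := Finset.univ.filter fun t => Δ.eval t ≠ 0
  have hgood : Fintype.card k ≤ good.card + c := by
    have h1 : (Finset.univ.filter fun t => ¬ Δ.eval t ≠ 0).card ≤ c := by
      refine le_trans ?_ ((card_roots' Δ).trans hΔc)
      refine le_trans (Finset.card_le_card ?_) (Multiset.toFinset_card_le _)
      intro t ht
      have hΔ : Δ ≠ 0 := by rintro rfl; simp at hΔ0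
      simp only [ne_eq, not_not, Finset.mem_filter, Finset.mem_univ, true_and] at ht
      simp [hΔ, ht]
    have h2 := Finset.card_filter_add_card_filter_not (s := (Finset.univ : Finset k))
      (fun t => Δ.eval t ≠ 0)
    rw [Finset.card_univ] at h2
    simp only [good]
    omega
  -- the `n` points above each good `t` are the conjugates of `φ t`
  let F : k × G → (B →ₐ[k] Ω) := fun x =>
    (φ x.1).comp ((MulSemiringAction.toAlgHom k[X] B x.2).restrictScalars k)
  have hF : ∀ x b, F x b = φ x.1 (x.2 • b) := fun x b => rfl
  have hFinj : Set.InjOn F {x | Δ.eval x.1 ≠ 0} := by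
    rintro ⟨t, h⟩ ht ⟨t', h'⟩ ht' heq
    have h1 : t = t' := by
      have := DFunLike.congr_fun heq (algebraMap k[X] B X)
      rw [hF, hF, smul_algebraMap, smul_algebraMap, hφ, hφ] at this
      rw [eval_X, eval_X] at this
      exact (algebraMap k Ω).injective this
    subst h1
    have h2 : h = h' := by
      refine hfix _ _ fun b hb => hφinj t ht _ _ (hsmulroot _ _ hb) (hsmulroot _ _ hb) ?_
      exact DFunLike.congr_fun heq b
    rw [h2]
  -- the Frobenius of the point `F (t, h)` is the conjugate `h⁻¹ * g t * h`
  let S : G → Finset (k × G) := fun γ =>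
    (good ×ˢ Finset.univ).filter fun x => x.2⁻¹ * g x.1 * x.2 = γ
  have hS : ∀ γ, 4 * n * (S γ).card ≤ (4 * n + 1) * Fintype.card k := by
    intro γ
    refine le_trans (Nat.mul_le_mul_left _ ?_) hbound
    have hcard : ((S γ).image F).card = (S γ).card := by
      refine Finset.card_image_of_injOn (hFinj.mono ?_)
      intro x hx
      have : x.1 ∈ good := by
        have := (Finset.mem_filter.1 hx).1
        exact (Finset.mem_product.1 this).1
      exact (Finset.mem_filter.1 this).2
    rw [← hcard]
    refine stepanov_bound n (n * c) (poleSpace k L) one_mem_poleSpace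
      (fun m l a ha b hb => mul_mem_poleSpace ha hb)
      (fun m a ha => by rw [hn]; exact natDegree_norm_le ha) hdim
      ((MulSemiringAction.toAlgHom k[X] B γ).restrictScalars k)
      (fun m a ha => smul_mem_poleSpace γ ha) hPne hres p μ q m κ hQ hq hcount _ ?_
    intro ψ hψ x
    obtain ⟨⟨t, h⟩, hth, rfl⟩ := Finset.mem_image.1 hψ
    have hγ : h⁻¹ * g t * h = γ := (Finset.mem_filter.1 hth).2
    rw [hF, hg, smul_smul]
    change _ = F (t, h) (γ • x)
    rw [hF, smul_smul, ← hγ]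
    congr 2
    group
  have hsum : ∑ γ, (S γ).card = good.card * n := by
    rw [← Finset.card_eq_sum_card_fiberwise (f := fun x : k × G => x.2⁻¹ * g x.1 * x.2)
      (s := good ×ˢ Finset.univ) (t := Finset.univ) (fun _ _ => Finset.mem_coe.2 (Finset.mem_univ _)),
      Finset.card_product, Finset.card_univ, hnG']
  set N := Nat.card {t : k // Δ.eval t ≠ 0 ∧ ∃ τ, (f.map (evalRingHom t)).IsRoot τ} with hN
  have hS1 : (S 1).card ≤ N * n := by
    have h1 : S 1 ⊆ (good.filter fun t => g t = 1) ×ˢ Finset.univ := by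
      rintro ⟨t, h⟩ hx
      rw [Finset.mem_filter, Finset.mem_product] at hx
      rw [Finset.mem_product, Finset.mem_filter]
      refine ⟨⟨hx.1.1, ?_⟩, hx.1.2⟩
      have h2 : h⁻¹ * g t * h = 1 := hx.2
      have h3 : g t = h * (h⁻¹ * g t * h) * h⁻¹ := by group
      rw [h3, h2]; group
    refine (Finset.card_le_card h1).trans ?_
    rw [Finset.card_product, Finset.card_univ, hnG']
    refine Nat.mul_le_mul_right _ ?_
    rw [hN, Nat.card_eq_fintype_card, Fintype.card_subtype]
    refine Finset.card_le_card fun t ht => ?_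
    rw [Finset.mem_filter] at ht
    have htΔ : Δ.eval t ≠ 0 := (Finset.mem_filter.1 ht.1).2
    refine Finset.mem_filter.2 ⟨Finset.mem_univ _, htΔ, ?_⟩
    have hspl := IsSplittingField.splits L fK
    have hdeg : fK.natDegree = f.natDegree := hf.natDegree_map _
    obtain ⟨θ, hθ⟩ := hspl.exists_eval_eq_zero (by
      rw [degree_map, degree_eq_natDegree (hf.map _).ne_zero, hdeg]
      exact_mod_cast hD.ne')
    obtain ⟨b, -, hb⟩ := hroot θ (by
      rw [mem_rootSet]; exact ⟨(hf.map _).ne_zero, by rwa [eval_map_algebraMap] at hθ⟩)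
    have h2 := hg t b
    rw [ht.2, one_smul] at h2
    obtain ⟨τ, hτ⟩ := exists_of_pow_card_eq h2
    refine ⟨τ, ?_⟩
    have h3 := hφroot t b hb
    rw [← hτ, aeval_algebraMap_apply, map_eq_zero_iff _ (algebraMap k Ω).injective] at h3
    exact h3
  have hn0 : 0 < n := by rw [hn]; exact Module.finrank_pos
  have hrest : 4 * n * ∑ γ ∈ Finset.univ.erase (1 : G), (S γ).card ≤
      (n - 1) * ((4 * n + 1) * Fintype.card k) := by
    rw [Finset.mul_sum]
    refine (Finset.sum_le_card_nsmul _ _ _ fun γ _ => hS γ).trans ?_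
    rw [Finset.card_erase_of_mem (Finset.mem_univ _), Finset.card_univ, hnG', smul_eq_mul]
  have htot : (S 1).card + ∑ γ ∈ Finset.univ.erase (1 : G), (S γ).card = good.card * n := by
    rw [Finset.add_sum_erase _ (fun γ => (S γ).card) (Finset.mem_univ _), hsum]
  obtain ⟨n', rfl⟩ : ∃ n', n = n' + 1 := ⟨n - 1, by omega⟩
  rw [Nat.add_sub_cancel] at hrest
  set Q := Fintype.card k
  set R := ∑ γ ∈ Finset.univ.erase (1 : G), (S γ).card
  have h1 : 4 * (n' + 1) * (good.card * (n' + 1)) ≤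
      4 * (n' + 1) * (N * (n' + 1)) + n' * ((4 * (n' + 1) + 1) * Q) := by
    rw [← htot, mul_add]
    exact add_le_add (Nat.mul_le_mul_left _ hS1) hrest
  have h2 : 4 * (n' + 1) * (Q * (n' + 1)) ≤ 4 * (n' + 1) * ((good.card + c) * (n' + 1)) := by
    gcongr
  have h3 : 2 * (n' + 1) * Q ≤ 2 * (n' + 1) * (2 * (n' + 1) * N) := by nlinarith
  exact Nat.le_of_mul_le_mul_left h3 (by positivity)

end Curve

theorem finrank_splittingField_le {K : Type*} [Field K] (f : K[X]) (hf : f.Separable) :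
    Module.finrank K f.SplittingField ≤ f.natDegree.factorial := by
  classical
  have : IsGalois K f.SplittingField := IsGalois.of_separable_splitting_field hf
  have hsp := IsSplittingField.splits f.SplittingField f
  have : Fact ((f.map (algebraMap K f.SplittingField)).Splits) := ⟨hsp⟩
  rw [← IsGalois.card_aut_eq_finrank]
  have h1 := Nat.card_le_card_of_injective _ (Polynomial.Gal.galActionHom_injective f f.SplittingField)
  refine h1.trans ?_
  rw [Nat.card_eq_fintype_card, Fintype.card_perm]
  exact Nat.factorial_le ((card_rootSet_eq_natDegree hf hsp).le)

/-- An elementary substitute for the Weil bound: a plane curve `f(t, T) = 0` over a large finite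
field `k`, monic in `T` of degree `D` and split with distinct roots above `t = 0`, has a root `T` in
`k` for a proportion at least `1 / (2 D!)` of all `t`.  The threshold depends only on the
characteristic and on the degrees. -/
theorem curve_theorem (D c p : ℕ) (hD : 0 < D) [hp : Fact p.Prime] :
    ∃ Q₀ : ℕ, ∀ (k : Type*) [Field k] [Fintype k] [CharP k p], Q₀ ≤ Fintype.card k →
      ∀ (f a b : k[X][X]) (Δ : k[X]), f.Monic → f.natDegree = D →
      (∀ i, (f.coeff i).natDegree ≤ c) → Δ.natDegree ≤ c →
      a * f + b * derivative f = C Δ → Δ.eval 0 ≠ 0 → (f.map (evalRingHom 0)).Splits →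
      Fintype.card k ≤ 2 * D.factorial *
        Nat.card {t : k // Δ.eval t ≠ 0 ∧ ∃ τ, (f.map (evalRingHom t)).IsRoot τ} := by
  have hpar : ∀ n, ∃ Q₀, 0 < n → ∀ s, Q₀ ≤ p ^ s → ∃ μ q m κ : ℕ, p ^ s = p ^ μ * q ∧
      n * (m + n * c) < q ∧
      n * (p ^ μ * (m + n * c) + (κ + n * c)) + 1 < n * m * (n * κ) ∧
      4 * n * (n * ((m + n * c) + (κ + n * c) * q)) ≤ (4 * n + 1) * p ^ s := by
    intro n
    by_cases hn : 0 < n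
    · obtain ⟨Q, hQ⟩ := stepanov_params n (n * c) p hn hp.out
      exact ⟨Q, fun _ => hQ⟩
    · exact ⟨0, fun h => absurd h hn⟩
  choose Q hQ using hpar
  refine ⟨(Finset.range (D.factorial + 1)).sup fun n => Q n + 4 * n * c, ?_⟩
  intro k _ _ _ hk f a b Δ hf hfD hc hΔc hab hΔ0 hsplit
  set K := RatFunc k
  set fK := f.map (algebraMap k[X] K) with hfK
  have hsep : fK.Separable := by
    have hΔ : algebraMap k[X] K Δ ≠ 0 := by
      rw [Ne, map_eq_zero_iff _ (IsFractionRing.injective k[X] K)]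
      rintro rfl
      simp at hΔ0
    have h1 := congrArg (Polynomial.map (algebraMap k[X] K)) hab
    simp only [Polynomial.map_add, Polynomial.map_mul, map_C, ← derivative_map] at h1
    refine ⟨C (algebraMap k[X] K Δ)⁻¹ * a.map (algebraMap k[X] K),
      C (algebraMap k[X] K Δ)⁻¹ * b.map (algebraMap k[X] K), ?_⟩
    rw [mul_assoc, mul_assoc, ← mul_add, hfK, h1, ← C_mul, inv_mul_cancel₀ hΔ, C_1]
  have : IsGalois K fK.SplittingField := IsGalois.of_separable_splitting_field hsep
  set n := Module.finrank K fK.SplittingField with hn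
  have hnpos : 0 < n := Module.finrank_pos
  have hnD : n ≤ D.factorial := by
    rw [← hfD, ← hf.natDegree_map (algebraMap k[X] K)]
    exact finrank_splittingField_le fK hsep
  have hkn : Q n + 4 * n * c ≤ Fintype.card k :=
    (Finset.le_sup (f := fun n => Q n + 4 * n * c) (Finset.mem_range.2 (by omega))).trans hk
  obtain ⟨s, -, hs⟩ := FiniteField.card k p
  obtain ⟨μ, q, m, κ, h1, h2, h3, h4⟩ := hQ n hnpos s (by omega)
  rw [← hs] at h1 h4
  have : IsScalarTower k k[X] fK.SplittingField := IsScalarTower.of_algebraMap_eq fun x => by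
    rw [IsScalarTower.algebraMap_apply k K fK.SplittingField,
      IsScalarTower.algebraMap_apply k[X] K fK.SplittingField,
      ← IsScalarTower.algebraMap_apply k k[X] K]
  refine (curve_aux (L := fK.SplittingField) f a b Δ hf (by omega) c hc hΔc hab hΔ0 hsplit p μ q m κ n
    hn h1 h2 h3 h4 (by omega)).trans ?_
  gcongr

end

/-! ### Counting points on hypersurfaces -/

section

open Polynomial

/-- Counting points of a hypersurface by counting on all lines through one good point. -/
theorem many_points (D c p : ℕ) (hD : 0 < D) [hp : Fact p.Prime] :
    ∃ Q₀ : ℕ, ∀ (k : Type*) [Field k] [Fintype k] [CharP k p], Q₀ ≤ Fintype.card k →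
      ∀ (σ : Type*) [Fintype σ] (f a b : (MvPolynomial σ k)[X]) (Δ : MvPolynomial σ k), f.Monic →
      f.natDegree = D →
      (∀ i, (f.coeff i).totalDegree ≤ c) → Δ.totalDegree ≤ c →
      a * f + b * derivative f = C Δ → ∀ z : σ → k, MvPolynomial.eval z Δ ≠ 0 →
      (f.map (MvPolynomial.eval z)).Splits →
      Fintype.card k ^ Fintype.card σ ≤ 4 * D.factorial *
        Nat.card {y : σ → k // MvPolynomial.eval y Δ ≠ 0 ∧
          ∃ τ, (f.map (MvPolynomial.eval y)).IsRoot τ} := by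
  classical
  obtain ⟨Q₀, hQ₀⟩ := curve_theorem D c p hD
  refine ⟨Q₀ + 4 * D.factorial, ?_⟩
  intro k _ _ _ hk σ _ f a b Δ hf hfD hc hΔc hab z hΔz hsplit
  set Q := Fintype.card k with hQ
  let S : (σ → k) → Prop := fun y => MvPolynomial.eval y Δ ≠ 0 ∧
    ∃ τ, (f.map (MvPolynomial.eval y)).IsRoot τ
  have hline : ∀ v : σ → k, Q ≤ 2 * D.factorial *
      (Finset.univ.filter fun t : k => S (z + t • v)).card := by
    intro v
    let l : MvPolynomial σ k →ₐ[k] k[X] := MvPolynomial.aeval fun i => C (z i) + C (v i) * X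
    have hl : ∀ t : k, (evalRingHom t).comp l.toRingHom = MvPolynomial.eval (z + t • v) := by
      intro t
      refine MvPolynomial.ringHom_ext (fun r => ?_) (fun i => ?_)
      · simp [l]
      · simp only [l, RingHom.comp_apply, AlgHom.toRingHom_eq_coe, RingHom.coe_coe,
          MvPolynomial.aeval_X, coe_evalRingHom, eval_add, eval_mul, eval_C, eval_X,
          MvPolynomial.eval_X, Pi.add_apply, Pi.smul_apply, smul_eq_mul]
        ring
    have hl' : ∀ (t : k) (q : MvPolynomial σ k),
        (l.toRingHom q).eval t = MvPolynomial.eval (z + t • v) q :=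
      fun t q => RingHom.congr_fun (hl t) q
    have hdeg : ∀ q : MvPolynomial σ k, q.totalDegree ≤ c → (l.toRingHom q).natDegree ≤ c := by
      intro q hq
      have := MvPolynomial.aeval_natDegree_le q hq (fun i => C (z i) + C (v i) * X) (n := 1)
        (fun i => by compute_degree)
      simpa using this
    have h := hQ₀ k (by omega) (f.map l.toRingHom) (a.map l.toRingHom) (b.map l.toRingHom)
      (l.toRingHom Δ) (hf.map _) (by rw [hf.natDegree_map, hfD])
      (fun i => by rw [coeff_map]; exact hdeg _ (hc i)) (hdeg _ hΔc)
      (by rw [derivative_map, ← Polynomial.map_mul, ← Polynomial.map_mul, ← Polynomial.map_add,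
          hab, map_C])
      (by rw [hl']; simpa using hΔz)
      (by rw [map_map, hl]; simpa using hsplit)
    simp only [map_map, hl, hl'] at h
    rw [Nat.card_eq_fintype_card, Fintype.card_subtype] at h
    exact h
  set N := (Finset.univ.filter S).card with hN
  -- every `y` lies on exactly one line through `z` with `y` at a prescribed parameter `t ≠ 0`
  have hcol0 : ∀ t : k, t ≠ 0 → (Finset.univ.filter fun v : σ → k => S (z + t • v)).card = N := by
    intro t ht
    rw [hN]
    refine Finset.card_bij (fun v _ => z + t • v) (fun v hv => ?_) (fun v _ v' _ h => ?_)
      (fun y hy => ?_)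
    · simpa using hv
    · exact smul_right_injective _ ht (add_left_cancel h)
    · refine ⟨t⁻¹ • (y - z), ?_, ?_⟩
      · simp only [Finset.mem_filter, Finset.mem_univ, true_and] at hy ⊢
        simpa [smul_smul, ht] using hy
      · simp [smul_smul, ht]
  have hdc : ∑ v : σ → k, (Finset.univ.filter fun t : k => S (z + t • v)).card =
      ∑ t : k, (Finset.univ.filter fun v : σ → k => S (z + t • v)).card := by
    simp only [Finset.card_filter]
    exact Finset.sum_comm
  set M := Q ^ Fintype.card σ with hM
  have hcardfun : Fintype.card (σ → k) = M := by rw [Fintype.card_fun]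
  have hup : ∑ t : k, (Finset.univ.filter fun v : σ → k => S (z + t • v)).card ≤ Q * N + M := by
    rw [← Finset.add_sum_erase _ _ (Finset.mem_univ (0 : k)), add_comm]
    refine add_le_add ?_ ?_
    · rw [Finset.sum_congr rfl fun t ht => hcol0 t (Finset.ne_of_mem_erase ht), Finset.sum_const,
        smul_eq_mul]
      exact Nat.mul_le_mul_right _ (Finset.card_le_univ _)
    · exact (Finset.card_le_univ _).trans hcardfun.le
  have hlow : M * Q ≤ 2 * D.factorial * (Q * N + M) := by
    refine le_trans ?_ (Nat.mul_le_mul_left _ (hdc ▸ hup))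
    rw [Finset.mul_sum, ← hcardfun, ← smul_eq_mul]
    exact Finset.card_nsmul_le_sum _ _ _ fun v _ => hline v
  have hQpos : 0 < Q := Fintype.card_pos
  rw [Nat.card_eq_fintype_card, Fintype.card_subtype]
  change M ≤ 4 * D.factorial * N
  have h1 : M * (4 * D.factorial) ≤ M * Q := Nat.mul_le_mul_left _ (by omega)
  have h2 : Q * M ≤ Q * (4 * D.factorial * N) := by nlinarith
  exact Nat.le_of_mul_le_mul_left h2 hQpos

end

/-! ### Entropy of uniform distributions -/

section

section Entropy
variable {N Ω : Type*} [Fintype N] [DecidableEq N] [Fintype Ω] [DecidableEq Ω]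

/-- The values of the coordinates in `I`, padded by `0` outside `I`. -/
def restr (ξ : N → Ω → ℕ) (I : Finset N) (ω : Ω) : N → ℕ := fun i => if i ∈ I then ξ i ω else 0

/-- Adding one coordinate multiplies the number of values by at most the number of values the new
coordinate can take when the old ones are fixed. -/
theorem card_restr_insert (ξ : N → Ω → ℕ) (I : Finset N) (i : N) (m : ℕ) (T : Finset Ω)
    (h : ∀ v, ((T.filter fun ω => restr ξ I ω = v).image (ξ i)).card ≤ m) :
    (T.image (restr ξ (insert i I))).card ≤ m * (T.image (restr ξ I)).card := by
  let g : (N → ℕ) → (N → ℕ) := fun v j => if j ∈ I then v j else 0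
  have hg : ∀ ω, g (restr ξ (insert i I) ω) = restr ξ I ω := by
    intro ω
    funext j
    by_cases hj : j ∈ I <;> simp [g, restr, hj]
  have himg : (T.image (restr ξ (insert i I))).image g = T.image (restr ξ I) := by
    rw [Finset.image_image]
    exact Finset.image_congr fun ω _ => hg ω
  rw [← himg]
  refine Finset.card_le_mul_card_image _ _ fun v hv => (le_trans ?_ (h v))
  refine Finset.card_le_card_of_injOn (fun u => u i) ?_ ?_
  · intro u hu
    simp only [Finset.coe_filter, Finset.mem_image, Set.mem_ofPred_eq] at hu
    obtain ⟨⟨ω, hω, rfl⟩, hu⟩ := hu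
    simp only [Finset.coe_image, Set.mem_image, Finset.coe_filter, Set.mem_ofPred_eq]
    exact ⟨ω, ⟨hω, by rw [← hu, hg]⟩, by simp [restr]⟩
  · intro u hu u' hu' huu
    simp only [Finset.coe_filter, Finset.mem_image, Set.mem_ofPred_eq] at hu hu'
    obtain ⟨⟨ω, hω, rfl⟩, hu⟩ := hu
    obtain ⟨⟨ω', hω', rfl⟩, hu'⟩ := hu'
    rw [hg] at hu hu'
    funext j
    by_cases hj : j = i
    · subst hj; exact huu
    · have := congrFun (hu.trans hu'.symm) j
      simpa [restr, hj] using this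

/-- Iterating `card_restr_insert` over a set `L` of coordinates. -/
theorem card_restr_union (ξ : N → Ω → ℕ) (I : Finset N) (m : ℕ) (T : Finset Ω) (L : Finset N)
    (h : ∀ I', I ⊆ I' → ∀ i ∈ L, ∀ v,
      ((T.filter fun ω => restr ξ I' ω = v).image (ξ i)).card ≤ m) :
    (T.image (restr ξ (L ∪ I))).card ≤ m ^ L.card * (T.image (restr ξ I)).card := by
  induction L using Finset.induction_on with
  | empty => simp
  | insert i L hi ih =>
    rw [Finset.insert_union, Finset.card_insert_of_notMem hi, pow_succ']
    refine (card_restr_insert ξ (L ∪ I) i m T fun v =>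
      h _ Finset.subset_union_right i (Finset.mem_insert_self _ _) v).trans ?_
    rw [mul_assoc]
    exact Nat.mul_le_mul_left _ (ih fun I' hI' j hj => h I' hI' j (Finset.mem_insert_of_mem hj))

theorem margProb_uniform (ξ : N → Ω → ℕ) (I : Finset N) (v : N → ℕ) :
    margProb (fun _ => ((Fintype.card Ω : ℝ))⁻¹) ξ I v =
      ((Finset.univ.filter fun ω => restr ξ I ω = v).card : ℝ) * (Fintype.card Ω : ℝ)⁻¹ := by
  unfold margProb
  rw [Finset.sum_const, nsmul_eq_mul]
  rfl

theorem sum_margProb [Nonempty Ω] (ξ : N → Ω → ℕ) (I : Finset N) :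
    ∑ v ∈ Finset.univ.image (restr ξ I),
      margProb (fun _ => ((Fintype.card Ω : ℝ))⁻¹) ξ I v = 1 := by
  simp_rw [margProb_uniform]
  rw [← Finset.sum_mul, ← Nat.cast_sum, ← Finset.card_eq_sum_card_image, Finset.card_univ]
  exact mul_inv_cancel₀ (by exact_mod_cast Fintype.card_ne_zero)

theorem margProb_pos [Nonempty Ω] (ξ : N → Ω → ℕ) (I : Finset N) (v : N → ℕ)
    (hv : v ∈ Finset.univ.image (restr ξ I)) :
    0 < margProb (fun _ => ((Fintype.card Ω : ℝ))⁻¹) ξ I v := by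
  rw [margProb_uniform]
  have h1 : 0 < (Fintype.card Ω : ℝ) := by exact_mod_cast Fintype.card_pos
  have h2 : 0 < (Finset.univ.filter fun ω => restr ξ I ω = v).card := by
    rw [Finset.card_pos]
    obtain ⟨ω, -, hω⟩ := Finset.mem_image.1 hv
    exact ⟨ω, by simp [hω]⟩
  have h2' : (0 : ℝ) < (Finset.univ.filter fun ω => restr ξ I ω = v).card := by exact_mod_cast h2
  positivity

theorem margEntropy_eq (w : Ω → ℝ) (ξ : N → Ω → ℕ) (I : Finset N) :
    margEntropy w ξ I = - ∑ v ∈ Finset.univ.image (restr ξ I),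
      margProb w ξ I v * Real.log (margProb w ξ I v) := rfl

/-- Entropy is at most the logarithm of the number of values. -/
theorem margEntropy_le [Nonempty Ω] (ξ : N → Ω → ℕ) (I : Finset N) (M : ℝ)
    (hM : ((Finset.univ.image (restr ξ I)).card : ℝ) ≤ M) :
    margEntropy (fun _ => ((Fintype.card Ω : ℝ))⁻¹) ξ I ≤ Real.log M := by
  have hpos := margProb_pos ξ I
  have hsum := sum_margProb ξ I
  rw [margEntropy_eq]
  set V := Finset.univ.image (restr ξ I) with hV
  set P := margProb (fun _ => ((Fintype.card Ω : ℝ))⁻¹) ξ I with hP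
  have hV0 : (0 : ℝ) < V.card := by
    have : V.Nonempty := Finset.univ_nonempty.image _
    exact_mod_cast this.card_pos
  have hM0 : 0 < M := hV0.trans_le hM
  have key : ∀ v ∈ V, - (P v * Real.log (P v)) ≤ P v * Real.log M + (M⁻¹ - P v) := by
    intro v hv
    have hp := hpos v hv
    have h := Real.log_le_sub_one_of_pos (x := (P v * M)⁻¹) (by positivity)
    rw [Real.log_inv, Real.log_mul hp.ne' hM0.ne'] at h
    have h2 := mul_le_mul_of_nonneg_left h hp.le
    have h3 : P v * ((P v * M)⁻¹ - 1) = M⁻¹ - P v := by field_simp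
    rw [h3] at h2
    linarith
  have := Finset.sum_le_sum key
  rw [Finset.sum_neg_distrib, Finset.sum_add_distrib, ← Finset.sum_mul, Finset.sum_sub_distrib,
    hsum, Finset.sum_const, nsmul_eq_mul] at this
  have h4 : (V.card : ℝ) * M⁻¹ ≤ 1 := by
    rw [← div_eq_mul_inv, div_le_one hM0]; exact hM
  linarith

/-- Entropy is at least the min-entropy. -/
theorem le_margEntropy [Nonempty Ω] (ξ : N → Ω → ℕ) (I : Finset N) (M : ℝ)
    (hM : ∀ v, ((Finset.univ.filter fun ω => restr ξ I ω = v).card : ℝ) ≤ M) :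
    Real.log (Fintype.card Ω) - Real.log M ≤
      margEntropy (fun _ => ((Fintype.card Ω : ℝ))⁻¹) ξ I := by
  have hpos := margProb_pos ξ I
  have hsum := sum_margProb ξ I
  have hform := margProb_uniform ξ I
  rw [margEntropy_eq]
  set V := Finset.univ.image (restr ξ I) with hV
  set P := margProb (fun _ => ((Fintype.card Ω : ℝ))⁻¹) ξ I with hP
  have hn : 0 < (Fintype.card Ω : ℝ) := by exact_mod_cast Fintype.card_pos
  have key : ∀ v ∈ V, P v * (Real.log (Fintype.card Ω) - Real.log M) ≤
      - (P v * Real.log (P v)) := by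
    intro v hv
    have hp := hpos v hv
    have hle : P v ≤ M * (Fintype.card Ω : ℝ)⁻¹ := by
      rw [hform]
      exact mul_le_mul_of_nonneg_right (hM v) (by positivity)
    have hM0 : 0 < M := by
      by_contra hcon
      have : M * (Fintype.card Ω : ℝ)⁻¹ ≤ 0 :=
        mul_nonpos_of_nonpos_of_nonneg (not_lt.1 hcon) (by positivity)
      linarith
    have h := Real.log_le_log hp hle
    rw [Real.log_mul hM0.ne' (by positivity), Real.log_inv] at h
    nlinarith
  have := Finset.sum_le_sum key
  rw [Finset.sum_neg_distrib, ← Finset.sum_mul, hsum] at this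
  linarith

end Entropy

/-- Consider a finite set of vectors with entries in a set of `Q` elements, such that an entry in the
closure of `I` (the relation `cl I i`) takes at most `C` values once the entries in `I` are fixed,
and suppose that there are at least `Q ^ d / C` vectors, `d` being the rank.  Then the entropy
profile of the uniform distribution is `log Q` times the rank, up to a bounded error: the upper
bound counts the values of the entries in `I`, the lower bound the vectors with prescribed entries
in `I`. -/
theorem profile_estimate {N : Type*} [Fintype N] [DecidableEq N] {Ω : Type} [Fintype Ω]
    (ξ : N → Ω → ℕ) (Q C d : ℕ) (hQ : 1 ≤ Q) (hC : 1 ≤ C) (r : Finset N → ℕ)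
    (cl : Finset N → N → Prop) (hmono : ∀ I I' i, I ⊆ I' → cl I i → cl I' i)
    (hr : ∀ I, ∃ J K : Finset N, J ⊆ I ∧ J.card = r I ∧ (∀ i ∈ I, cl J i) ∧
      J.card + K.card = d ∧ ∀ i, cl (K ∪ I) i)
    (hξ : ∀ i ω, ξ i ω < Q) (hinj : ∀ ω ω', (∀ i, ξ i ω = ξ i ω') → ω = ω')
    (hcl : ∀ I i, cl I i → ∀ v,
      ((Finset.univ.filter fun ω => restr ξ I ω = v).image (ξ i)).card ≤ C)
    (hcard : Q ^ d ≤ C * Fintype.card Ω) :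
    ∃ X : FinRandomVector N, ∀ I, |X.profile I - r I * Real.log Q| ≤
      (Fintype.card N + 1) * Real.log C := by
  classical
  have hn : 0 < Fintype.card Ω := by
    by_contra h
    have : 0 < Q ^ d := by positivity
    have h0 : Fintype.card Ω = 0 := by omega
    rw [h0] at hcard
    omega
  have : Nonempty Ω := Fintype.card_pos_iff.1 hn
  have hn' : (0 : ℝ) < Fintype.card Ω := by exact_mod_cast hn
  have hQ' : (0 : ℝ) < Q := by exact_mod_cast hQ
  have hC' : (0 : ℝ) < C := by exact_mod_cast hC
  have hlogC : 0 ≤ Real.log C := Real.log_natCast_nonneg C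
  refine ⟨⟨Ω, fun _ => ((Fintype.card Ω : ℝ))⁻¹, ξ, fun _ => by positivity, ?_⟩, ?_⟩
  · rw [Finset.sum_const, Finset.card_univ, nsmul_eq_mul, mul_inv_cancel₀ hn'.ne']
  intro I
  change |margEntropy (fun _ => ((Fintype.card Ω : ℝ))⁻¹) ξ I - _| ≤ _
  obtain ⟨J, K, hJI, hJr, hJI', hJK, hK⟩ := hr I
  have hQbound : ∀ (T : Finset Ω) (I' : Finset N) (i : N) (v : N → ℕ),
      ((T.filter fun ω => restr ξ I' ω = v).image (ξ i)).card ≤ Q := by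
    intro T I' i v
    calc _ ≤ (Finset.range Q).card := Finset.card_le_card fun a ha => by
          obtain ⟨ω, -, rfl⟩ := Finset.mem_image.1 ha
          exact Finset.mem_range.2 (hξ i ω)
      _ = Q := Finset.card_range Q
  have hCbound : ∀ (T : Finset Ω) (I' : Finset N) (i : N) (v : N → ℕ), cl I' i →
      ((T.filter fun ω => restr ξ I' ω = v).image (ξ i)).card ≤ C := by
    intro T I' i v hi
    exact (Finset.card_le_card (Finset.image_subset_image
      (Finset.filter_subset_filter _ (Finset.subset_univ T)))).trans (hcl I' i hi v)
  have hpowC : ∀ L : Finset N, C ^ L.card ≤ C ^ Fintype.card N := fun L =>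
    Nat.pow_le_pow_right hC (Finset.card_le_univ L)
  have hupper : (Finset.univ.image (restr ξ I)).card ≤ C ^ Fintype.card N * Q ^ r I := by
    have h1 := card_restr_union ξ ∅ Q Finset.univ J fun I' _ i _ v => hQbound _ I' i v
    have h2 := card_restr_union ξ J C Finset.univ I fun I' hI' i hi v =>
      hCbound _ I' i v (hmono _ _ _ hI' (hJI' i hi))
    have h0 : (Finset.univ.image (restr ξ ∅)).card ≤ 1 := by
      rw [Finset.card_le_one]
      intro a ha b hb
      obtain ⟨ω, -, rfl⟩ := Finset.mem_image.1 ha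
      obtain ⟨ω', -, rfl⟩ := Finset.mem_image.1 hb
      funext i
      simp [restr]
    rw [Finset.union_eq_left.2 hJI] at h2
    rw [Finset.union_empty, hJr] at h1
    calc _ ≤ _ := h2
      _ ≤ C ^ Fintype.card N * (Q ^ r I * 1) :=
        Nat.mul_le_mul (hpowC I) (h1.trans (Nat.mul_le_mul_left _ h0))
      _ = _ := by ring
  have hlower : ∀ v, (Finset.univ.filter fun ω => restr ξ I ω = v).card ≤
      C ^ Fintype.card N * Q ^ K.card := by
    intro v
    set T := Finset.univ.filter fun ω => restr ξ I ω = v with hT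
    have h1 := card_restr_union ξ I Q T K fun I' _ i _ v => hQbound _ I' i v
    have h2 := card_restr_union ξ (K ∪ I) C T Finset.univ fun I' hI' i _ v =>
      hCbound _ I' i v (hmono _ _ _ hI' (hK i))
    have h0 : (T.image (restr ξ I)).card ≤ 1 := by
      rw [Finset.card_le_one]
      intro a ha b hb
      obtain ⟨ω, hω, rfl⟩ := Finset.mem_image.1 ha
      obtain ⟨ω', hω', rfl⟩ := Finset.mem_image.1 hb
      rw [(Finset.mem_filter.1 hω).2, (Finset.mem_filter.1 hω').2]
    have h3 : (T.image (restr ξ (Finset.univ ∪ (K ∪ I)))).card = T.card := by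
      refine Finset.card_image_of_injective _ fun ω ω' h => hinj ω ω' fun i => ?_
      simpa [restr] using congrFun h i
    rw [h3] at h2
    calc _ ≤ _ := h2
      _ ≤ C ^ Fintype.card N * (Q ^ K.card * 1) :=
        Nat.mul_le_mul (hpowC _) (h1.trans (Nat.mul_le_mul_left _ h0))
      _ = _ := by ring
  have hU := margEntropy_le ξ I (C ^ Fintype.card N * Q ^ r I) (by exact_mod_cast hupper)
  have hL := le_margEntropy ξ I (C ^ Fintype.card N * Q ^ K.card)
    (fun v => by exact_mod_cast hlower v)
  have hlog : d * Real.log Q ≤ Real.log C + Real.log (Fintype.card Ω) := by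
    rw [← Real.log_pow, ← Real.log_mul hC'.ne' hn'.ne']
    exact Real.log_le_log (by positivity) (by exact_mod_cast hcard)
  rw [Real.log_mul (by positivity) (by positivity), Real.log_pow, Real.log_pow] at hU hL
  have hd : (d : ℝ) = r I + K.card := by rw [← hJK, hJr]; push_cast; ring
  rw [hd] at hlog
  rw [abs_le]
  constructor <;> linarith

/-- A rank function which is approximated, up to a bounded error, by entropy profiles divided by
`log Q` for arbitrarily large `Q` is a limit of multiples of entropy profiles. -/
theorem mem_closure_of_estimate {N : Type*} [Fintype N] [DecidableEq N] (r : Finset N → ℕ) (c : ℝ)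
    (h : ∀ Q₀ : ℕ, ∃ Q : ℕ, Q₀ ≤ Q ∧ ∃ X : FinRandomVector N,
      ∀ I, |X.profile I - r I * Real.log Q| ≤ c) :
    (fun I : Finset N => (r I : ℝ)) ∈ closure {g : Finset N → ℝ |
        ∃ c : ℝ, 0 ≤ c ∧ ∃ X : FinRandomVector N, g = fun I => c * X.profile I} := by
  choose Q hQ X hX using h
  have hQt : Filter.Tendsto (fun n => Real.log (Q n)) Filter.atTop Filter.atTop :=
    Real.tendsto_log_atTop.comp (tendsto_natCast_atTop_atTop.comp
      (Filter.tendsto_atTop_mono hQ Filter.tendsto_id))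
  refine mem_closure_of_tendsto (b := Filter.atTop)
    (f := fun n : ℕ => fun I => (Real.log (Q n))⁻¹ * (X n).profile I) ?_
    (Filter.Eventually.of_forall fun n =>
      ⟨_, inv_nonneg.2 (Real.log_natCast_nonneg _), X n, rfl⟩)
  rw [tendsto_pi_nhds]
  intro I
  rw [tendsto_iff_dist_tendsto_zero]
  refine squeeze_zero' (g := fun n => c * (Real.log (Q n))⁻¹)
    (Filter.Eventually.of_forall fun n => dist_nonneg) ?_ ?_
  · filter_upwards [hQt.eventually_gt_atTop 0] with n hn
    have h1 : (Real.log (Q n))⁻¹ * (X n).profile I - r I =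
        ((X n).profile I - r I * Real.log (Q n)) * (Real.log (Q n))⁻¹ := by
      field_simp
    rw [Real.dist_eq, h1, abs_mul, abs_of_pos (inv_pos.2 hn)]
    exact mul_le_mul_of_nonneg_right (hX n I) (inv_pos.2 hn).le
  · simpa using (tendsto_inv_atTop_zero.comp hQt).const_mul c

end

/-! ### The rank function of an algebraic matroid -/

section

section Matroid
variable {F E N : Type*} [Field F] [Field E] [Algebra F E] [Fintype N] [DecidableEq N] (x : N → E)

/-- Within `I`, an independent set `J` extends to a basis of `I`. -/
theorem exists_basis_extend (J I : Finset N) (hJI : J ⊆ I) (hJ : AlgebraicIndepOn F x J) :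
    ∃ B : Finset N, J ⊆ B ∧ B ⊆ I ∧ AlgebraicIndepOn F x B ∧
      ∀ i ∈ I, IsAlgebraic (Algebra.adjoin F (x '' B)) (x i) := by
  classical
  obtain ⟨B, hB⟩ := (Set.toFinite {B : Finset N | J ⊆ B ∧ B ⊆ I ∧
    AlgebraicIndepOn F x B}).exists_maximal ⟨J, subset_rfl, hJI, hJ⟩
  refine ⟨B, hB.1.1, hB.1.2.1, hB.1.2.2, fun i hi => ?_⟩
  by_contra hcon
  have h1 : AlgebraicIndepOn F x (insert i (B : Set N)) := hB.1.2.2.insert hcon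
  have hiB : i ∈ B := hB.2 (y := insert i B) ⟨hB.1.1.trans (Finset.subset_insert _ _),
    Finset.insert_subset hi hB.1.2.1, by rwa [Finset.coe_insert]⟩ (Finset.subset_insert _ _)
    (Finset.mem_insert_self _ _)
  have hmem : x i ∈ Algebra.adjoin F (x '' B) := Algebra.subset_adjoin ⟨i, hiB, rfl⟩
  exact hcon (isAlgebraic_algebraMap (A := E) (⟨x i, hmem⟩ : Algebra.adjoin F _))

/-- The supremum of the sizes of independent families in `F(x_i : i ∈ I)` is the size of any basis
`J` of `I`. -/
theorem sSup_eq_card (J I : Finset N) (hJI : J ⊆ I) (hJ : AlgebraicIndepOn F x J)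
    (hI : ∀ i ∈ I, IsAlgebraic (Algebra.adjoin F (x '' J)) (x i)) :
    sSup {n : ℕ | ∃ s : Fin n → ↥(IntermediateField.adjoin F (x '' ↑I)),
          AlgebraicIndependent F s} = J.card := by
  classical
  refine IsGreatest.csSup_eq ⟨?_, ?_⟩
  · let e : Fin J.card ≃ J := J.equivFin.symm
    refine ⟨fun n => ⟨x (e n), IntermediateField.subset_adjoin F _ ⟨e n, hJI (e n).2, rfl⟩⟩, ?_⟩
    have h : AlgebraicIndependent F (fun n => x (e n)) := hJ.comp e e.injective
    exact AlgebraicIndependent.of_comp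
      (IntermediateField.adjoin F (x '' (I : Set N))).val h
  · rintro n ⟨s, hs⟩
    have hsE : AlgebraicIndependent F (fun i => (s i : E)) :=
      hs.map' (f := (IntermediateField.adjoin F (x '' (I : Set N))).val) Subtype.val_injective
    have hsub : Set.range (fun i => (s i : E)) ⊆
        (AlgebraicIndependent.matroid F E).closure (x '' J) := by
      rw [AlgebraicIndependent.matroid_closure_eq]
      rintro _ ⟨i, rfl⟩
      have h1 : IsAlgebraic (IntermediateField.adjoin F (x '' (I : Set N))) (s i : E) :=
        isAlgebraic_algebraMap (s i)
      rw [IntermediateField.isAlgebraic_adjoin_iff] at h1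
      refine h1.adjoin_of_forall_isAlgebraic fun y hy => ?_
      obtain ⟨⟨j, hj, rfl⟩, -⟩ := hy
      exact hI j hj
    have h2 := Matroid.Indep.encard_le_eRk_of_subset
      (AlgebraicIndependent.matroid_indep_iff.2 hsE.coe_range) hsub
    rw [Matroid.eRk_closure_eq] at h2
    have h3 := h2.trans ((Matroid.eRk_le_encard _ _).trans (Set.encard_image_le x J))
    rw [← Set.image_univ, hsE.injective.encard_image, Set.encard_univ, Set.encard_coe_eq_coe_finsetCard,
      ENat.card_eq_coe_fintype_card, Fintype.card_fin] at h3
    exact_mod_cast h3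

theorem algebraicIndepOn_empty : AlgebraicIndepOn F x ((∅ : Finset N) : Set N) := by
  rw [Finset.coe_empty]
  exact algebraicIndependent_empty_type_iff.2 (algebraMap F E).injective

/-- A basis of every `I`, and its completion to a basis of the whole family. -/
theorem rank_data (I : Finset N) : ∃ J K : Finset N, J ⊆ I ∧
    J.card = sSup {n : ℕ | ∃ s : Fin n → ↥(IntermediateField.adjoin F (x '' ↑I)),
          AlgebraicIndependent F s} ∧
    (∀ i ∈ I, IsAlgebraic (Algebra.adjoin F (x '' J)) (x i)) ∧
    J.card + K.card = sSup {n : ℕ | ∃ s : Fin n → ↥(IntermediateField.adjoin F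
          (x '' ((Finset.univ : Finset N) : Set N))), AlgebraicIndependent F s} ∧
    ∀ i, IsAlgebraic (Algebra.adjoin F (x '' (K ∪ I : Finset N))) (x i) := by
  obtain ⟨J, -, hJI, hJ, hJ'⟩ := exists_basis_extend x ∅ I (Finset.empty_subset _)
    (algebraicIndepOn_empty (F := F) x)
  obtain ⟨B, hJB, hBu, hB, hB'⟩ := exists_basis_extend x J Finset.univ (Finset.subset_univ _) hJ
  refine ⟨J, B \ J, hJI, (sSup_eq_card x J I hJI hJ hJ').symm, hJ', ?_, fun i => ?_⟩
  · rw [sSup_eq_card x B Finset.univ hBu hB hB', ← Finset.card_sdiff_add_card_eq_card hJB]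
    ring
  · refine (hB' i (Finset.mem_univ i)).adjoin_of_forall_isAlgebraic fun y hy => ?_
    obtain ⟨⟨j, hj, rfl⟩, hy⟩ := hy
    refine absurd ⟨j, ?_, rfl⟩ hy
    by_cases h : j ∈ J
    · simp [hJI h]
    · have : j ∈ B := hj
      simp [h, this]

theorem isAlgebraic_mono (I I' : Finset N) (i : N) (h : I ⊆ I')
    (hi : IsAlgebraic (Algebra.adjoin F (x '' I)) (x i)) :
    IsAlgebraic (Algebra.adjoin F (x '' I')) (x i) :=
  hi.adjoin_of_forall_isAlgebraic fun _ hy =>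
    absurd (Set.image_mono (Finset.coe_subset.2 h) hy.1) hy.2

end Matroid

end

/-! ### Separable models and specialisation -/

section

open Polynomial
open scoped IntermediateField

universe u

/-- Finitely many elements of `E` that are separable over the fraction field `K` of `P` lie in
`P[θ, 1/Δ]` for a single integral element `θ`, whose minimal polynomial has invertible derivative
over `P[1/Δ]`. -/
theorem exists_model {P E : Type*} (K : Type*) [CommRing P] [IsDomain P] [IsIntegrallyClosed P]
    [Field E] [Field K] [Algebra P K] [IsFractionRing P K] [Algebra P E] [Algebra K E]
    [IsScalarTower P K E] (Z : Finset E) (hZ : ∀ z ∈ Z, IsSeparable K z) :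
    ∃ (θ : E) (f a b : P[X]) (Δ : P), f.Monic ∧ 0 < f.natDegree ∧
      (∀ h : P[X], aeval θ h = 0 → f ∣ h) ∧ aeval θ f = 0 ∧ a * f + b * derivative f = C Δ ∧ Δ ≠ 0 ∧
      ∀ z ∈ Z, ∃ h : P[X], algebraMap P E Δ * z = aeval θ h := by
  classical
  let L := IntermediateField.adjoin K (Z : Set E)
  have hZint : ∀ z ∈ (Z : Set E), IsIntegral K z := fun z hz => (hZ z hz).isIntegral
  have : FiniteDimensional K L := IntermediateField.finiteDimensional_adjoin hZint
  have : Algebra.IsSeparable K L :=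
    (IntermediateField.isSeparable_adjoin_iff_isSeparable K E).2 hZ
  obtain ⟨α, hα⟩ := Field.exists_primitive_element K L
  have hKE : Function.Injective (algebraMap K E) := (algebraMap K E).injective
  have hPK : Function.Injective (algebraMap P K) := IsFractionRing.injective P K
  have hPE : Function.Injective (algebraMap P E) := by
    rw [IsScalarTower.algebraMap_eq P K E]; exact hKE.comp hPK
  have : FaithfulSMul P E := (faithfulSMul_iff_algebraMap_injective P E).2 hPE
  -- scale the primitive element to make it integral
  have hαalg : IsAlgebraic P (α : E) :=
    (IsFractionRing.isAlgebraic_iff P K E).2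
      ((Algebra.IsAlgebraic.isAlgebraic α).algHom L.val)
  obtain ⟨δ, hδ, hδint⟩ := hαalg.exists_integral_multiple
  set θ : E := δ • (α : E) with hθ
  have hδK : algebraMap P K δ ≠ 0 := by
    rw [map_ne_zero_iff _ hPK]; exact hδ
  have hgen : ∀ z ∈ L, ∃ h : K[X], z = aeval θ h := by
    intro z hz
    have h1 : (⟨z, hz⟩ : L) ∈ K⟮α⟯ := by rw [hα]; trivial
    rw [← IntermediateField.mem_toSubalgebra,
      IntermediateField.adjoin_simple_toSubalgebra_of_isAlgebraic
        (Algebra.IsAlgebraic.isAlgebraic α), Algebra.adjoin_singleton_eq_range_aeval] at h1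
    obtain ⟨h, hh⟩ := h1
    refine ⟨h.comp (C (algebraMap P K δ)⁻¹ * X), ?_⟩
    have h2 : aeval (α : E) h = z := by
      have := congrArg (L.val) hh
      simpa [← aeval_algHom_apply] using this
    rw [aeval_comp, ← h2]
    congr 2
    simp only [map_mul, aeval_C, aeval_X, hθ, Algebra.smul_def, map_inv₀,
      ← IsScalarTower.algebraMap_apply P K E]
    rw [inv_mul_cancel_left₀]
    rw [map_ne_zero_iff _ hPE]; exact hδ
  have hclear : ∀ h : K[X], ∃ δ : P, δ ≠ 0 ∧ ∃ h' : P[X],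
      h'.map (algebraMap P K) = C (algebraMap P K δ) * h := by
    intro h
    obtain ⟨b, hbP, hb⟩ := IsLocalization.integerNormalization_spec (nonZeroDivisors P) h
    refine ⟨b, nonZeroDivisors.ne_zero hbP, _, hb.trans ?_⟩
    rw [Algebra.smul_def]
    rfl
  let f := minpoly P θ
  have hfm : f.Monic := minpoly.monic hδint
  have hfK : minpoly K θ = f.map (algebraMap P K) :=
    minpoly.isIntegrallyClosed_eq_field_fractions K E hδint
  have hsep : (minpoly K θ).Separable := by
    have h1 : θ ∈ L := by
      rw [hθ, Algebra.smul_def, IsScalarTower.algebraMap_apply P K E]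
      exact L.mul_mem (L.algebraMap_mem _) α.2
    have h2 := Algebra.IsSeparable.isSeparable K (⟨θ, h1⟩ : L)
    have h3 : minpoly K (⟨θ, h1⟩ : L) = minpoly K θ :=
      (minpoly.algebraMap_eq (B := L) (B' := E) Subtype.val_injective ⟨θ, h1⟩).symm
    rw [← h3]; exact h2
  obtain ⟨a', b', hab⟩ := hsep
  obtain ⟨δa, hδa, a, ha⟩ := hclear a'
  obtain ⟨δb, hδb, b, hb⟩ := hclear b'
  have hz : ∀ z : Z, ∃ δ : P, δ ≠ 0 ∧ ∃ h : P[X], algebraMap P E δ * z = aeval θ h := by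
    rintro ⟨z, hz⟩
    obtain ⟨h, hh⟩ := hgen z (IntermediateField.subset_adjoin K _ hz)
    obtain ⟨δ, hδ, h', hh'⟩ := hclear h
    refine ⟨δ, hδ, h', ?_⟩
    rw [← aeval_map_algebraMap K, hh', map_mul, aeval_C, ← IsScalarTower.algebraMap_apply P K E,
      ← hh]
  choose δz hδz hz' hhz using hz
  set Δ' := ∏ z, δz z with hΔ'
  refine ⟨θ, f, C (δb * Δ') * a, C (δa * Δ') * b, δa * δb * Δ', hfm, minpoly.natDegree_pos hδint,
    fun h hh => minpoly.isIntegrallyClosed_dvd hδint hh, minpoly.aeval P θ, ?_, ?_, ?_⟩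
  · apply map_injective _ hPK
    rw [hfK] at hab
    simp only [Polynomial.map_add, Polynomial.map_mul, map_C, ha, hb, ← derivative_map, map_mul]
    linear_combination (C (algebraMap P K δa) * C (algebraMap P K δb) * C (algebraMap P K Δ')) * hab
  · exact mul_ne_zero (mul_ne_zero hδa hδb) (Finset.prod_ne_zero_iff.2 fun z _ => hδz z)
  · intro z hzZ
    obtain ⟨u, hu⟩ : δz ⟨z, hzZ⟩ ∣ δa * δb * Δ' :=
      Dvd.dvd.mul_left (Finset.dvd_prod_of_mem _ (Finset.mem_univ _)) _
    refine ⟨C u * hz' ⟨z, hzZ⟩, ?_⟩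
    rw [hu, map_mul, map_mul, ← hhz, aeval_C]
    ring

/-- Some power of an algebraic element, with exponent a power of the characteristic exponent, is
separable. -/
theorem exists_pow_isSeparable {K E : Type*} [Field K] [Field E] [Algebra K E] (q : ℕ)
    [ExpChar K q] (α : E) (hα : IsAlgebraic K α) : ∃ m : ℕ, IsSeparable K (α ^ q ^ m) := by
  obtain ⟨g, hg, m, hm⟩ := (minpoly.irreducible hα.isIntegral).hasSeparableContraction q
  refine ⟨m, hg.of_dvd (minpoly.dvd K _ ?_)⟩
  rw [← expand_aeval, hm, minpoly.aeval]

/-- The universal property of the domain `M[θ, 1/Δ] ⊆ E`, where `f` generates the relations of `θ`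
over `M`: a point of `f = 0`, `Δ ≠ 0` in a field `k` extends to a homomorphism. -/
theorem exists_subring_lift {M E : Type*} [CommRing M] [Field E] [Algebra M E] (θ : E) (f : M[X])
    (Δ : M) (hf : ∀ h : M[X], aeval θ h = 0 → f ∣ h) (hΔ : algebraMap M E Δ ≠ 0) :
    ∃ T : Subring E, (∀ (h : M[X]), aeval θ h ∈ T) ∧ (algebraMap M E Δ)⁻¹ ∈ T ∧
      ∀ (k : Type) [Field k] (φ : M →+* k) (τ : k), (f.map φ).IsRoot τ → φ Δ ≠ 0 →
        ∃ ψ : T →+* k, ∀ (m : M) (hm : algebraMap M E m ∈ T), ψ ⟨_, hm⟩ = φ m := by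
  let s : M[X] := C Δ
  let S := Localization.Away s
  have hs : IsUnit ((aeval θ : M[X] →ₐ[M] E).toRingHom s) := by
    simpa [s] using hΔ
  let ι : S →+* E := IsLocalization.Away.lift s hs
  have hι : ∀ h : M[X], ι (algebraMap M[X] S h) = aeval θ h := fun h =>
    IsLocalization.Away.lift_eq s hs h
  refine ⟨ι.range, fun h => ⟨_, hι h⟩, ?_, ?_⟩
  · refine ⟨IsLocalization.Away.invSelf s, ?_⟩
    have h1 := congrArg ι (IsLocalization.Away.mul_invSelf (S := S) s)
    rw [map_mul, hι, map_one] at h1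
    simp only [s, aeval_C] at h1
    exact eq_inv_of_mul_eq_one_right h1
  · intro k _ φ τ hτ hφ
    have hs' : IsUnit (eval₂RingHom φ τ s) := by simpa [s] using hφ
    let ψ' : S →+* k := IsLocalization.Away.lift s hs'
    have hψ' : ∀ h : M[X], ψ' (algebraMap M[X] S h) = eval₂ φ τ h := fun h =>
      IsLocalization.Away.lift_eq s hs' h
    have hker : RingHom.ker ι.rangeRestrict ≤ RingHom.ker ψ' := by
      intro u hu
      rw [RingHom.mem_ker] at hu ⊢
      have hu' : ι u = 0 := congrArg Subtype.val hu
      obtain ⟨⟨h, t⟩, ht⟩ := IsLocalization.surj (Submonoid.powers s) u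
      have h1 := congrArg ι ht
      rw [map_mul, hu', zero_mul, hι] at h1
      obtain ⟨w, rfl⟩ := hf h h1.symm
      have h2 := congrArg ψ' ht
      rw [map_mul, hψ' (f * w), eval₂_mul, ← eval_map, hτ.eq_zero, zero_mul] at h2
      refine (mul_eq_zero.1 h2).resolve_right ?_
      exact ((IsLocalization.map_units S t).map ψ').ne_zero
    refine ⟨ι.rangeRestrict.liftOfSurjective ι.rangeRestrict_surjective ⟨ψ', hker⟩, ?_⟩
    intro m hm
    have h3 : (⟨algebraMap M E m, hm⟩ : ι.range) = ι.rangeRestrict (algebraMap M[X] S (C m)) := by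
      apply Subtype.ext
      change _ = ι _
      rw [hι, aeval_C]
    rw [h3]
    rw [RingHom.liftOfSurjective, RingHom.liftOfRightInverse_comp_apply, hψ', eval₂_C]

theorem isJacobsonRing_int : IsJacobsonRing ℤ := by
  rw [isJacobsonRing_iff_prime_eq]
  intro P hP
  by_cases h : P = ⊥
  · subst h
    refine le_antisymm (fun u hu => ?_) Ideal.le_jacobson
    have h1 := Ideal.mem_jacobson_bot.1 hu u
    rw [Int.isUnit_iff] at h1
    rw [Ideal.mem_bot]
    rcases h1 with h1 | h1 <;> nlinarith [mul_self_nonneg u]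
  · have := hP.isMaximal h
    exact Ideal.jacobson_eq_self_of_isMaximal

theorem finite_of_moduleFinite_int (κ : Type*) [Field κ] [Module.Finite ℤ κ] : Finite κ := by
  obtain ⟨p, hp⟩ := CharP.exists κ
  rcases Nat.eq_zero_or_pos p with rfl | hpos
  · have := CharP.charP_to_charZero κ
    have : Algebra.IsIntegral ℤ κ := Algebra.IsIntegral.of_finite ℤ κ
    exact absurd (isField_of_isIntegral_of_isField (R := ℤ) (S := κ)
      (algebraMap ℤ κ).injective_int (Field.toIsField κ)) Int.not_isField
  · have : Fact p.Prime := ⟨(CharP.char_is_prime_or_zero κ p).resolve_right hpos.ne'⟩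
    let := ZMod.algebra κ p
    have : Module.Finite (ZMod p) κ := Module.Finite.of_restrictScalars_finite ℤ (ZMod p) κ
    exact Module.finite_of_finite (ZMod p)

theorem finite_of_surjective_of_finiteType_int (M : Type*) {S κ : Type*} [CommRing M]
    [Algebra.FiniteType ℤ M] [CommRing S] [Algebra M S] [Algebra.FiniteType M S] [Field κ]
    (π : S →+* κ) (hπ : Function.Surjective π) : Finite κ := by
  have := isJacobsonRing_int
  have : Algebra.FiniteType ℤ S := .trans (S := M) inferInstance inferInstance
  have : Algebra.FiniteType ℤ κ := .of_surjective π.toIntAlgHom hπ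
  have := finite_of_finite_type_of_isJacobsonRing ℤ κ
  exact finite_of_moduleFinite_int κ

/-- Over a finitely generated domain, a non-zero `Δ` is non-zero at some point over a finite
field. -/
theorem exists_finite_point {M : Type u} [CommRing M] [IsDomain M] [Algebra.FiniteType ℤ M] (Δ : M)
    (hΔ : Δ ≠ 0) : ∃ (κ : Type u) (_ : Field κ) (_ : Finite κ) (φ : M →+* κ), φ Δ ≠ 0 := by
  let S := Localization.Away Δ
  have : Nontrivial S :=
    (IsLocalization.injective S (powers_le_nonZeroDivisors_of_noZeroDivisors hΔ)).nontrivial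
  have : Algebra.FiniteType M S := IsLocalization.finiteType_of_monoid_fg (Submonoid.powers Δ) S
  obtain ⟨m, hm⟩ := Ideal.exists_maximal S
  let := Ideal.Quotient.field m
  refine ⟨S ⧸ m, inferInstance,
    finite_of_surjective_of_finiteType_int M (Ideal.Quotient.mk m) Ideal.Quotient.mk_surjective,
    (Ideal.Quotient.mk m).comp (algebraMap M S), ?_⟩
  exact ((IsLocalization.Away.algebraMap_isUnit (S := S) Δ).map (Ideal.Quotient.mk m)).ne_zero

/-- Large finite extensions in which a given polynomial splits. -/
theorem exists_large_extension {κ : Type*} [Field κ] [Finite κ] (p : ℕ) [Fact p.Prime] [CharP κ p]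
    (g : κ[X]) (Q₀ : ℕ) : ∃ (k : Type) (_ : Field k) (_ : Fintype k) (_ : CharP k p) (j : κ →+* k),
      Q₀ ≤ Fintype.card k ∧ (g.map j).Splits := by
  let k₁ := g.SplittingField
  have : CharP k₁ p := charP_of_injective_algebraMap (algebraMap κ k₁).injective p
  have : Finite k₁ := Module.finite_of_finite κ
  let k := FiniteField.Extension k₁ p (Q₀ + 1)
  let : Fintype k := Fintype.ofFinite k
  refine ⟨k, inferInstance, inferInstance,
    charP_of_injective_algebraMap (algebraMap k₁ k).injective p,
    (algebraMap k₁ k).comp (algebraMap κ k₁), ?_, ?_⟩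
  · rw [← Nat.card_eq_fintype_card, FiniteField.natCard_extension]
    have h1 : 1 < Nat.card k₁ := Finite.one_lt_card
    exact (Nat.lt_pow_self h1).le.trans' (Nat.le_succ _)
  · rw [← Polynomial.map_map]
    exact (SplittingField.splits g).map _

theorem totalDegree_map_le' {σ R S : Type*} [CommSemiring R] [CommSemiring S] (φ : R →+* S)
    (q : MvPolynomial σ R) : (MvPolynomial.map φ q).totalDegree ≤ q.totalDegree :=
  Finset.sup_mono (MvPolynomial.support_map_subset φ q)

/-- An element of an `F`-algebra generated by `U` already lies in the ring generated by `U` and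
finitely many constants. -/
theorem exists_finset_mem_adjoin {F E : Type*} [Field F] [Field E] [Algebra F E] (U : Set E) (z : E)
    (hz : z ∈ Algebra.adjoin F U) : ∃ S : Finset F, ∀ S' : Set F, (S : Set F) ⊆ S' →
      z ∈ Subring.closure (algebraMap F E '' S' ∪ U) := by
  classical
  induction hz using Algebra.adjoin_induction with
  | mem u hu => exact ⟨∅, fun S' _ => Subring.subset_closure (Or.inr hu)⟩
  | algebraMap r =>
    exact ⟨{r}, fun S' hS' => Subring.subset_closure (Or.inl ⟨r, hS' (by simp), rfl⟩)⟩
  | add a b _ _ ha hb =>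
    obtain ⟨S₁, h₁⟩ := ha
    obtain ⟨S₂, h₂⟩ := hb
    refine ⟨S₁ ∪ S₂, fun S' hS' => ?_⟩
    rw [Finset.coe_union, Set.union_subset_iff] at hS'
    exact add_mem (h₁ S' hS'.1) (h₂ S' hS'.2)
  | mul a b _ _ ha hb =>
    obtain ⟨S₁, h₁⟩ := ha
    obtain ⟨S₂, h₂⟩ := hb
    refine ⟨S₁ ∪ S₂, fun V hV => ?_⟩
    rw [Finset.coe_union, Set.union_subset_iff] at hV
    exact mul_mem (h₁ V hV.1) (h₂ V hV.2)

/-- A polynomial over `F` has coefficients in a subring containing a suitable finite set. -/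
theorem exists_finset_lift {F σ : Type*} [Field F] (h : (MvPolynomial σ F)[X]) :
    ∃ S : Finset F, ∀ R : Subalgebra ℤ F, (S : Set F) ⊆ R → ∃ h₀ : (MvPolynomial σ R)[X],
      h₀.map (MvPolynomial.map (algebraMap R F)) = h := by
  classical
  refine ⟨h.support.biUnion fun n => (h.coeff n).coeffs, fun R hR => ?_⟩
  have : h ∈ lifts (MvPolynomial.map (σ := σ) (algebraMap R F)) := by
    rw [lifts_iff_coeff_lifts]
    intro n
    rw [MvPolynomial.mem_range_map_iff_coeffs_subset]
    intro c hc
    by_cases hn : n ∈ h.support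
    · refine ⟨⟨c, hR ?_⟩, rfl⟩
      rw [Finset.mem_coe, Finset.mem_biUnion]
      exact ⟨n, hn, hc⟩
    · rw [notMem_support_iff.1 hn] at hc
      simp at hc
  exact (mem_lifts h).1 this

end

/-! ### Models of algebraic matroids -/

section

open Polynomial

section Assembly
variable {F E N : Type*} [Field F] [Field E] [Algebra F E] [Fintype N] [DecidableEq N] (x : N → E)

/-- Replacing the `x i` by powers does not affect algebraic dependence. -/
theorem exists_relation (n : N → ℕ) (hn : ∀ i, 0 < n i) (J : Finset N) (i : N)
    (h : IsAlgebraic (Algebra.adjoin F (x '' J)) (x i)) :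
    ∃ g : E[X], g ≠ 0 ∧ (∀ m, g.coeff m ∈ Algebra.adjoin F ((fun i => x i ^ n i) '' J)) ∧
      g.eval (x i ^ n i) = 0 := by
  have h1 : IsAlgebraic (Algebra.adjoin F ((fun i => x i ^ n i) '' (J : Set N))) (x i) := by
    refine h.adjoin_of_forall_isAlgebraic fun y hy => ?_
    obtain ⟨⟨j, hj, rfl⟩, -⟩ := hy
    refine IsAlgebraic.of_pow (hn j) ?_
    exact isAlgebraic_algebraMap (⟨x j ^ n j, Algebra.subset_adjoin ⟨j, hj, rfl⟩⟩ :
      Algebra.adjoin F ((fun i => x i ^ n i) '' (J : Set N)))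
  obtain ⟨g, hg, hg'⟩ := h1.pow (n i)
  refine ⟨g.map (algebraMap _ E), ?_, fun m => ?_, ?_⟩
  · rw [Ne, Polynomial.map_eq_zero_iff]
    · exact hg
    · exact Subtype.val_injective
  · rw [coeff_map]
    exact (g.coeff m).2
  · rwa [eval_map_algebraMap]

/-- The geometric model over `F`.  Here `B` is a basis of `x`, so that `F[x_B]` is a polynomial ring.
The `x i` are replaced by powers `x' i` that are separable over `F(x_B)`; a primitive element `θ`
with minimal polynomial `f` is chosen such that all `x' i`, and the inverses of the leading
coefficients of all relations expressing that `x' i` is algebraic over `x'_J`, lie in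
`F[x_B, θ, 1/Δ]`. -/
theorem exists_field_model (B : Finset N) (hB : AlgebraicIndepOn F x B)
    (hB' : ∀ i, IsAlgebraic (Algebra.adjoin F (x '' B)) (x i)) :
    ∃ (x' : N → E) (θ : E) (f a b : (MvPolynomial B F)[X]) (Δ : MvPolynomial B F),
      (∀ j ∈ B, x' j = x j) ∧ f.Monic ∧ 0 < f.natDegree ∧
      (∀ h : (MvPolynomial B F)[X],
        eval₂ (MvPolynomial.aeval fun j : B => x j).toRingHom θ h = 0 → f ∣ h) ∧
      a * f + b * derivative f = C Δ ∧ Δ ≠ 0 ∧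
      (∀ i, x' i ∈ Algebra.adjoin F
        (x '' B ∪ {θ, (MvPolynomial.aeval (fun j : B => x j) Δ)⁻¹})) ∧
      ∀ (J : Finset N) (i : N), IsAlgebraic (Algebra.adjoin F (x '' J)) (x i) →
        ∃ g : E[X], g ≠ 0 ∧ (∀ m, g.coeff m ∈ Algebra.adjoin F (x' '' J)) ∧ g.eval (x' i) = 0 ∧
          g.leadingCoeff⁻¹ ∈ Algebra.adjoin F
            (x '' B ∪ {θ, (MvPolynomial.aeval (fun j : B => x j) Δ)⁻¹}) := by
  classical
  let P := MvPolynomial B F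
  let y : B → E := fun j => x j
  have hy : AlgebraicIndependent F y := hB
  let algPE : Algebra P E := (MvPolynomial.aeval y).toRingHom.toAlgebra
  have hPEdef : ∀ p : P, algebraMap P E p = MvPolynomial.aeval y p := fun p => rfl
  have : FaithfulSMul P E := (faithfulSMul_iff_algebraMap_injective P E).2 hy
  have : IsScalarTower F P E := IsScalarTower.of_algebraMap_eq fun r => by
    rw [hPEdef, MvPolynomial.algebraMap_eq, MvPolynomial.algHom_C]
  let K := FractionRing P
  let algKE : Algebra K E := FractionRing.liftAlgebra P E
  have : IsScalarTower P K E := FractionRing.isScalarTower_liftAlgebra P E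
  have : IsScalarTower F K E := IsScalarTower.of_algebraMap_eq fun r => by
    rw [IsScalarTower.algebraMap_apply F P K, ← IsScalarTower.algebraMap_apply P K E,
      ← IsScalarTower.algebraMap_apply F P E]
  have hrange : x '' B = Set.range y := by
    ext; simp [y]
  have halg : ∀ i, IsAlgebraic K (x i) := by
    intro i
    have h1 := hB' i
    rw [hrange, Algebra.adjoin_range_eq_range_aeval] at h1
    refine (IsFractionRing.isAlgebraic_iff P K E).1 ?_
    exact h1.of_ringHom_of_comp_eq (MvPolynomial.aeval (R := F) y).rangeRestrict.toRingHom
      (RingHom.id E) (MvPolynomial.aeval (R := F) y).rangeRestrict_surjective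
      Function.injective_id rfl
  obtain ⟨q, hq⟩ := ExpChar.exists K
  choose m hm using fun i => exists_pow_isSeparable q (x i) (halg i)
  let n : N → ℕ := fun i => if i ∈ B then 1 else q ^ m i
  have hn : ∀ i, 0 < n i := fun i => by
    dsimp only [n]
    split_ifs
    · exact one_pos
    · exact pow_pos (expChar_pos K q) _
  have hsep : ∀ i, IsSeparable K (x i ^ n i) := fun i => by
    dsimp only [n]
    split_ifs with h
    · have : x i ^ 1 = algebraMap K E (algebraMap P K (MvPolynomial.X ⟨i, h⟩)) := by
        rw [← IsScalarTower.algebraMap_apply P K E, hPEdef, MvPolynomial.aeval_X, pow_one]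
      rw [this]
      exact isSeparable_algebraMap _
    · exact hm i
  have hrel := exists_relation (F := F) x n hn
  set x' : N → E := fun i => x i ^ n i with hx'
  have hsepJ : ∀ (J : Finset N) z, z ∈ Algebra.adjoin F (x' '' J) → IsSeparable K z := by
    intro J z hz
    rw [← mem_separableClosure_iff]
    have : Algebra.adjoin F (x' '' J) ≤ (separableClosure K E).toSubalgebra.restrictScalars F := by
      rw [Algebra.adjoin_le_iff]
      rintro _ ⟨j, -, rfl⟩
      exact mem_separableClosure_iff.2 (hsep j)
    exact this hz
  have hrel' : ∀ t : Finset N × N, ∃ g : E[X],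
      (IsAlgebraic (Algebra.adjoin F (x '' t.1)) (x t.2) → g ≠ 0 ∧
        (∀ m, g.coeff m ∈ Algebra.adjoin F (x' '' t.1)) ∧ g.eval (x' t.2) = 0) ∧
      IsSeparable K (g.leadingCoeff⁻¹) := by
    rintro ⟨J, i⟩
    by_cases h : IsAlgebraic (Algebra.adjoin F (x '' J)) (x i)
    · obtain ⟨g, h1, h2, h3⟩ := hrel J i h
      refine ⟨g, fun _ => ⟨h1, h2, h3⟩, ?_⟩
      have := mem_separableClosure_iff.2 (hsepJ J _ (h2 g.natDegree))
      exact mem_separableClosure_iff.1 (inv_mem this)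
    · refine ⟨0, fun h' => absurd h' h, ?_⟩
      have : ((0 : E[X]).leadingCoeff)⁻¹ = algebraMap K E 0 := by simp
      rw [this]
      exact isSeparable_algebraMap _
  choose g hg hgs using hrel'
  let Z : Finset E := Finset.univ.image x' ∪ Finset.univ.image fun t => (g t).leadingCoeff⁻¹
  have hZ : ∀ z ∈ Z, IsSeparable K z := by
    intro z hz
    simp only [Z, Finset.mem_union, Finset.mem_image, Finset.mem_univ, true_and] at hz
    obtain ⟨i, rfl⟩ | ⟨t, rfl⟩ := hz
    · exact hsep i
    · exact hgs t
  obtain ⟨θ, f, a, b, Δ, hf, hf0, hdvd, -, hab, hΔ, hZ'⟩ := exists_model (P := P) K Z hZ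
  have hΔE : algebraMap P E Δ ≠ 0 := by
    rw [map_ne_zero_iff _ (FaithfulSMul.algebraMap_injective P E)]; exact hΔ
  have hmem : ∀ z ∈ Z, z ∈ Algebra.adjoin F (x '' B ∪ {θ, (MvPolynomial.aeval y Δ)⁻¹}) := by
    intro z hz
    obtain ⟨h, hh⟩ := hZ' z hz
    have h1 : z = (algebraMap P E Δ)⁻¹ * aeval θ h := by
      rw [← hh, inv_mul_cancel_left₀ hΔE]
    set A := Algebra.adjoin F (x '' B ∪ {θ, (MvPolynomial.aeval y Δ)⁻¹}) with hA
    have hθ : θ ∈ A := Algebra.subset_adjoin (by simp)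
    have hi : (algebraMap P E Δ)⁻¹ ∈ A := Algebra.subset_adjoin (by simp [hPEdef])
    have hP : ∀ p : P, algebraMap P E p ∈ A := by
      intro p
      have h2 : algebraMap P E p ∈ Algebra.adjoin F (Set.range y) := by
        rw [Algebra.adjoin_range_eq_range_aeval]
        exact ⟨p, rfl⟩
      refine Algebra.adjoin_mono ?_ h2
      rw [← hrange]; exact Set.subset_union_left
    rw [h1]
    refine mul_mem hi ?_
    rw [aeval_eq_sum_range]
    refine sum_mem fun s _ => ?_
    rw [Algebra.smul_def]
    exact mul_mem (hP _) (pow_mem hθ _)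
  refine ⟨x', θ, f, a, b, Δ, fun j hj => by simp [hx', n, hj], hf, hf0, fun h hh => hdvd h hh, hab, hΔ,
    fun i => hmem _ (by simp [Z]), fun J i hJi => ?_⟩
  obtain ⟨h1, h2, h3⟩ := hg (J, i) hJi
  exact ⟨g (J, i), h1, h2, h3, hmem _ (Finset.mem_union_right _ (Finset.mem_image_of_mem _ (Finset.mem_univ (J, i))))⟩

end Assembly

section Assembly
variable {F E N : Type*} [Field F] [Field E] [Algebra F E] [Fintype N] [DecidableEq N] (x : N → E)

/-- The model of `exists_field_model` over a finitely generated subring `R` of `F`: the ring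
`T = R[x_B, θ, 1/Δ]` contains the `x' i` and the relations among them, with invertible leading
coefficients, and a homomorphism from `T` to a field `k` is available for every `k`-point of
`R[x_B]` with `Δ ≠ 0` at which `f` has a root in `k`. -/
theorem exists_arith_model (B : Finset N) (hB : AlgebraicIndepOn F x B)
    (hB' : ∀ i, IsAlgebraic (Algebra.adjoin F (x '' B)) (x i)) :
    ∃ (R : Subalgebra ℤ F) (_ : Algebra.FiniteType ℤ R) (f a b : (MvPolynomial B R)[X])
      (Δ : MvPolynomial B R) (T : Subring E) (x' : N → T) (ρ : R →+* T),
      f.Monic ∧ 0 < f.natDegree ∧ a * f + b * derivative f = C Δ ∧ Δ ≠ 0 ∧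
      (∀ (J : Finset N) (i : N), IsAlgebraic (Algebra.adjoin F (x '' J)) (x i) →
        ∃ g : T[X], IsUnit g.leadingCoeff ∧
          (∀ m, g.coeff m ∈ Subring.closure (Set.range ρ ∪ x' '' J)) ∧ g.eval (x' i) = 0) ∧
      ∀ (k : Type) [Field k] (φ : MvPolynomial B R →+* k) (τ : k), (f.map φ).IsRoot τ → φ Δ ≠ 0 →
        ∃ ψ : T →+* k, (∀ r, ψ (ρ r) = φ (MvPolynomial.C r)) ∧
          ∀ j : B, ψ (x' j) = φ (MvPolynomial.X j) := by
  classical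
  obtain ⟨x', θ, f, a, b, Δ, hx', hf, hf0, hdvd, hab, hΔ, hmem, hrel⟩ :=
    exists_field_model x B hB hB'
  set y : B → E := fun j => x j with hy
  have hyinj : AlgebraicIndependent F y := hB
  set W : Set E := x '' B ∪ {θ, (MvPolynomial.aeval y Δ)⁻¹} with hW
  obtain ⟨Sf, hSf⟩ := exists_finset_lift f
  obtain ⟨Sa, hSa⟩ := exists_finset_lift a
  obtain ⟨Sb, hSb⟩ := exists_finset_lift b
  obtain ⟨SΔ, hSΔ⟩ := exists_finset_lift (C Δ)
  choose Sx hSx using fun i => exists_finset_mem_adjoin W (x' i) (hmem i)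
  have hg : ∀ t : Finset N × N, ∃ S : Finset F, IsAlgebraic (Algebra.adjoin F (x '' t.1)) (x t.2) →
      ∃ g : E[X], g ≠ 0 ∧ g.eval (x' t.2) = 0 ∧ ∀ S' : Set F, (S : Set F) ⊆ S' →
        g.leadingCoeff⁻¹ ∈ Subring.closure (algebraMap F E '' S' ∪ W) ∧
        ∀ m, g.coeff m ∈ Subring.closure (algebraMap F E '' S' ∪ x' '' t.1) := by
    rintro ⟨J, i⟩
    by_cases h : IsAlgebraic (Algebra.adjoin F (x '' J)) (x i)
    · obtain ⟨g, hg0, hgc, hgr, hgl⟩ := hrel J i h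
      obtain ⟨S₁, hS₁⟩ := exists_finset_mem_adjoin _ _ hgl
      choose S₂ hS₂ using fun m => exists_finset_mem_adjoin _ _ (hgc m)
      refine ⟨S₁ ∪ (Finset.range (g.natDegree + 1)).biUnion S₂, fun _ =>
        ⟨g, hg0, hgr, fun S' hS' => ?_⟩⟩
      rw [Finset.coe_union, Set.union_subset_iff] at hS'
      refine ⟨hS₁ S' hS'.1, fun m => ?_⟩
      by_cases hm : m < g.natDegree + 1
      · refine hS₂ m S' (subset_trans ?_ hS'.2)
        exact_mod_cast Finset.subset_biUnion_of_mem S₂ (Finset.mem_range.2 hm)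
      · rw [coeff_eq_zero_of_natDegree_lt (by omega)]
        exact zero_mem _
    · exact ⟨∅, fun h' => absurd h' h⟩
  choose Sg hSg using hg
  let S : Finset F := Sf ∪ Sa ∪ Sb ∪ SΔ ∪ Finset.univ.biUnion Sx ∪ Finset.univ.biUnion Sg
  let R : Subalgebra ℤ F := Algebra.adjoin ℤ (S : Set F)
  have hSR : ∀ s ∈ S, s ∈ R := fun s hs => Algebra.subset_adjoin hs
  have hfin : Algebra.FiniteType ℤ R := Algebra.FiniteType.adjoin_of_finite S.finite_toSet
  obtain ⟨f₀, hf₀⟩ := hSf R fun s hs => hSR s (by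
    simp only [S, Finset.mem_union]; simp only [Finset.mem_coe] at hs; tauto)
  obtain ⟨a₀, ha₀⟩ := hSa R fun s hs => hSR s (by
    simp only [S, Finset.mem_union]; simp only [Finset.mem_coe] at hs; tauto)
  obtain ⟨b₀, hb₀⟩ := hSb R fun s hs => hSR s (by
    simp only [S, Finset.mem_union]; simp only [Finset.mem_coe] at hs; tauto)
  obtain ⟨h₀, hh₀⟩ := hSΔ R fun s hs => hSR s (by
    simp only [S, Finset.mem_union]; simp only [Finset.mem_coe] at hs; tauto)
  let M := MvPolynomial B R
  let ι : M →+* MvPolynomial B F := MvPolynomial.map (algebraMap R F)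
  have hι : Function.Injective ι := MvPolynomial.map_injective _ Subtype.val_injective
  let Δ₀ : M := h₀.coeff 0
  have hΔ₀ : ι Δ₀ = Δ := by
    have := congrArg (fun p => p.coeff 0) hh₀
    simpa [coeff_map] using this
  have hf₀m : f₀.Monic := by
    refine (Function.Injective.monic_map_iff hι).2 ?_
    rw [hf₀]; exact hf
  have hf₀d : 0 < f₀.natDegree := by
    rw [← natDegree_map_eq_of_injective hι, hf₀]; exact hf0
  have hab₀ : a₀ * f₀ + b₀ * derivative f₀ = C Δ₀ := by
    apply map_injective ι hι
    rw [Polynomial.map_add, Polynomial.map_mul, Polynomial.map_mul, map_C, ← derivative_map, hΔ₀]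
    rw [hf₀, ha₀, hb₀, hab]
  have hΔ₀0 : Δ₀ ≠ 0 := fun h => hΔ (by rw [← hΔ₀, h, map_zero])
  let algME : Algebra M E := ((MvPolynomial.aeval y).toRingHom.comp ι).toAlgebra
  have hME : ∀ p : M, algebraMap M E p = MvPolynomial.aeval y (ι p) := fun p => rfl
  have hdvd₀ : ∀ h : M[X], aeval θ h = 0 → f₀ ∣ h := by
    intro h hh
    rw [← Polynomial.map_dvd_map ι hι hf₀m]
    rw [hf₀]
    refine hdvd _ ?_
    rw [eval₂_map]
    exact hh
  have hΔE : algebraMap M E Δ₀ ≠ 0 := by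
    rw [hME, hΔ₀]
    exact (map_ne_zero_iff _ hyinj).2 hΔ
  obtain ⟨T, hT, hTi, hlift⟩ := exists_subring_lift θ f₀ Δ₀ hdvd₀ hΔE
  have hTM : ∀ m : M, algebraMap M E m ∈ T := fun m => by
    have := hT (C m)
    rwa [aeval_C] at this
  have hMC : ∀ r : R, algebraMap M E (MvPolynomial.C r) = algebraMap F E r := fun r => by
    change MvPolynomial.aeval y (MvPolynomial.map (algebraMap R F) (MvPolynomial.C r)) = _
    rw [MvPolynomial.map_C, MvPolynomial.aeval_C]; rfl
  have hMX : ∀ j : B, algebraMap M E (MvPolynomial.X j) = x j := fun j => by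
    change MvPolynomial.aeval y (MvPolynomial.map (algebraMap R F) (MvPolynomial.X j)) = _
    rw [MvPolynomial.map_X, MvPolynomial.aeval_X]
  have hTR : ∀ r : R, algebraMap F E r ∈ T := fun r => hMC r ▸ hTM _
  have hWT : W ⊆ T := by
    rintro w (⟨j, hj, rfl⟩ | rfl | rfl)
    · exact hMX ⟨j, hj⟩ ▸ hTM _
    · have := hT X
      rwa [aeval_X] at this
    · rw [hME, hΔ₀] at hTi
      exact hTi
  have hclT : Subring.closure (algebraMap F E '' (R : Set F) ∪ W) ≤ T := by
    rw [Subring.closure_le, Set.union_subset_iff]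
    refine ⟨?_, hWT⟩
    rintro _ ⟨r, hr, rfl⟩
    exact hTR ⟨r, hr⟩
  have hx'T : ∀ i, x' i ∈ T := fun i => hclT (hSx i R fun s hs => hSR s (by
    simp only [S, Finset.mem_union, Finset.mem_biUnion]
    exact Or.inl (Or.inr ⟨i, Finset.mem_univ _, hs⟩)))
  let ρ : R →+* T := ((algebraMap F E).comp (algebraMap R F)).codRestrict T hTR
  let xT : N → T := fun i => ⟨x' i, hx'T i⟩
  have hclJ : ∀ (J : Finset N) (z : E) (hz : z ∈ T),
      z ∈ Subring.closure (algebraMap F E '' (R : Set F) ∪ x' '' J) →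
      (⟨z, hz⟩ : T) ∈ Subring.closure (Set.range ρ ∪ xT '' J) := by
    intro J z hz h
    have h1 : algebraMap F E '' (R : Set F) ∪ x' '' J = T.subtype '' (Set.range ρ ∪ xT '' J) := by
      rw [Set.image_union, ← Set.range_comp, Set.image_image]
      congr 1
      ext w
      constructor
      · rintro ⟨r, hr, rfl⟩
        exact ⟨⟨r, hr⟩, rfl⟩
      · rintro ⟨r, rfl⟩
        exact ⟨r, r.2, rfl⟩
    rw [h1, ← RingHom.map_closure] at h
    obtain ⟨t, ht, rfl⟩ := h
    exact ht
  refine ⟨R, hfin, f₀, a₀, b₀, Δ₀, T, xT, ρ, hf₀m, hf₀d, hab₀, hΔ₀0, ?_, ?_⟩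
  · intro J i hJi
    obtain ⟨g, hg0, hgr, hgc⟩ := hSg (J, i) hJi
    obtain ⟨hgl, hgc⟩ := hgc R fun s hs => hSR s (by
      simp only [S, Finset.mem_union, Finset.mem_biUnion]
      exact Or.inr ⟨(J, i), Finset.mem_univ _, hs⟩)
    have hJT : Subring.closure (algebraMap F E '' (R : Set F) ∪ x' '' J) ≤ T := by
      rw [Subring.closure_le, Set.union_subset_iff]
      constructor
      · rintro _ ⟨r, hr, rfl⟩
        exact hTR ⟨r, hr⟩
      · rintro _ ⟨j, -, rfl⟩
        exact hx'T j
    have hgT : (↑g.coeffs : Set E) ⊆ T := by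
      intro c hc
      obtain ⟨m, -, rfl⟩ := mem_coeffs_iff.1 hc
      exact hJT (hgc m)
    refine ⟨g.toSubring T hgT, ?_, fun m => ?_, ?_⟩
    · have h2 : ((g.toSubring T hgT).leadingCoeff : E) = g.leadingCoeff := by
        rw [leadingCoeff, natDegree_toSubring, coeff_toSubring, leadingCoeff]
      refine IsUnit.of_mul_eq_one ⟨g.leadingCoeff⁻¹, hclT hgl⟩ ?_
      apply Subtype.ext
      change ((g.toSubring T hgT).leadingCoeff : E) * g.leadingCoeff⁻¹ = 1
      rw [h2, mul_inv_cancel₀ (leadingCoeff_ne_zero.2 hg0)]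
    · have h3 := hclJ J (g.coeff m) (hJT (hgc m)) (hgc m)
      have : (g.toSubring T hgT).coeff m = ⟨g.coeff m, hJT (hgc m)⟩ :=
        Subtype.ext (coeff_toSubring _ _ _)
      rw [this]; exact h3
    · apply Subtype.ext
      have h4 : T.subtype (eval (xT i) (g.toSubring T hgT)) = 0 := by
        rw [← eval₂_at_apply, ← eval_map, map_toSubring]
        exact hgr
      exact h4
  · intro k _ φ τ hτ hφ
    obtain ⟨ψ, hψ⟩ := hlift k φ τ hτ hφ
    refine ⟨ψ, fun r => ?_, fun j => ?_⟩
    · rw [← hψ _ (hTM _)]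
      congr 1
      exact Subtype.ext (hMC r).symm
    · rw [← hψ _ (hTM _)]
      congr 1
      exact Subtype.ext ((hx' j j.2).trans (hMX j).symm)

end Assembly

end

/-! ### Random points of the model -/

section

open Polynomial

section Assembly
variable {F E N : Type*} [Field F] [Field E] [Algebra F E] [Fintype N] [DecidableEq N] (x : N → E)

/-- Under specialisations `ψ ω` of `T` that agree on `R`, an element `x' i` satisfying a polynomial
relation `g` over `R[x'_I]` with invertible leading coefficient takes at most `deg g` values once
those of `x'_I` are fixed. -/
theorem fiber_card_le {T k R Ω : Type*} [CommRing T] [CommRing R] [Field k] [Fintype k] [Fintype Ω]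
    (ρ : R →+* T) (x' : N → T) (ψ : Ω → T →+* k) (χ : R →+* k) (hψ : ∀ ω r, ψ ω (ρ r) = χ r)
    (I : Finset N) (i : N) (g : T[X]) (hg : IsUnit g.leadingCoeff)
    (hgc : ∀ m, g.coeff m ∈ Subring.closure (Set.range ρ ∪ x' '' I)) (hgr : g.eval (x' i) = 0)
    (v : N → ℕ) :
    ((Finset.univ.filter fun ω =>
      restr (fun i ω => (Fintype.equivFin k (ψ ω (x' i)) : ℕ)) I ω = v).image
        fun ω => (Fintype.equivFin k (ψ ω (x' i)) : ℕ)).card ≤ g.natDegree := by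
  classical
  set ξ : N → Ω → ℕ := fun i ω => (Fintype.equivFin k (ψ ω (x' i)) : ℕ) with hξ
  obtain h0 | ⟨ω₀, hω₀⟩ := (Finset.univ.filter fun ω => restr ξ I ω = v).eq_empty_or_nonempty
  · rw [h0]; simp
  have hω₀' : restr ξ I ω₀ = v := (Finset.mem_filter.1 hω₀).2
  have hne : g.map (ψ ω₀) ≠ 0 := by
    intro h
    have := congrArg (fun p => p.coeff g.natDegree) h
    rw [coeff_map, coeff_zero] at this
    exact (hg.map (ψ ω₀)).ne_zero this
  have hsub : ((Finset.univ.filter fun ω => restr ξ I ω = v).image (ξ i)) ⊆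
      (g.map (ψ ω₀)).roots.toFinset.image fun a => (Fintype.equivFin k a : ℕ) := by
    intro w hw
    obtain ⟨ω, hω, rfl⟩ := Finset.mem_image.1 hw
    have hω' : restr ξ I ω = v := (Finset.mem_filter.1 hω).2
    have hagree : Subring.closure (Set.range ρ ∪ x' '' I) ≤ RingHom.eqLocus (ψ ω) (ψ ω₀) := by
      rw [Subring.closure_le, Set.union_subset_iff]
      constructor
      · rintro _ ⟨r, rfl⟩
        exact (hψ ω r).trans (hψ ω₀ r).symm
      · rintro _ ⟨j, hj, rfl⟩
        have h1 := congrFun (hω'.trans hω₀'.symm) j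
        have hj' : j ∈ I := hj
        simp only [restr, if_pos hj', hξ] at h1
        exact (Fintype.equivFin k).injective (Fin.ext h1)
    have hmap : g.map (ψ ω₀) = g.map (ψ ω) := by
      ext m
      rw [coeff_map, coeff_map]
      exact (hagree (hgc m)).symm
    refine Finset.mem_image.2 ⟨ψ ω (x' i), ?_, rfl⟩
    rw [Multiset.mem_toFinset, mem_roots hne, hmap, IsRoot, eval_map, eval₂_at_apply, hgr, map_zero]
  calc _ ≤ _ := Finset.card_le_card hsub
    _ ≤ _ := Finset.card_image_le
    _ ≤ _ := Multiset.toFinset_card_le _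
    _ ≤ _ := card_roots' _
    _ ≤ _ := natDegree_map_le

/-- For arbitrarily large finite fields `k`, the uniform distribution on the points of the arithmetic
model that lie above the `k`-points of affine space has entropy profile `log |k|` times the rank up
to a bounded error. -/
theorem exists_estimate : ∃ c : ℝ, ∀ Q₀ : ℕ, ∃ Q : ℕ, Q₀ ≤ Q ∧ ∃ X : FinRandomVector N, ∀ I,
    |X.profile I - (sSup {n : ℕ | ∃ s : Fin n → ↥(IntermediateField.adjoin F (x '' ↑I)),
          AlgebraicIndependent F s} : ℕ) * Real.log Q| ≤ c := by
  classical
  obtain ⟨B, -, hBu, hB, hB'⟩ := exists_basis_extend x ∅ Finset.univ (Finset.empty_subset _)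
    (algebraicIndepOn_empty (F := F) x)
  have hd := sSup_eq_card x B Finset.univ hBu hB hB'
  obtain ⟨R, _, f, a, b, Δ, T, x', ρ, hf, hf0, hab, hΔ, hrel, hlift⟩ :=
    exists_arith_model x B hB fun i => hB' i (Finset.mem_univ i)
  choose g hgu hgc hgr using hrel
  obtain ⟨Cg, hCg⟩ : ∃ Cg : ℕ, ∀ J i h, (g J i h).natDegree ≤ Cg := by
    obtain ⟨Cg, hCg⟩ := (Set.finite_range fun t : Finset N × N =>
      if h : IsAlgebraic (Algebra.adjoin F (x '' t.1)) (x t.2) then (g t.1 t.2 h).natDegree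
      else 0).bddAbove
    refine ⟨Cg, fun J i h => ?_⟩
    have := hCg ⟨(J, i), rfl⟩
    simpa only [dif_pos h] using this
  obtain ⟨c, hcf, hcΔ⟩ : ∃ c : ℕ, (∀ i, (f.coeff i).totalDegree ≤ c) ∧ Δ.totalDegree ≤ c := by
    refine ⟨max (f.support.sup fun i => (f.coeff i).totalDegree) Δ.totalDegree, fun i => ?_,
      le_max_right _ _⟩
    by_cases hi : i ∈ f.support
    · exact (Finset.le_sup (f := fun i => (f.coeff i).totalDegree) hi).trans (le_max_left _ _)
    · rw [notMem_support_iff.1 hi]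
      simp
  have : IsDomain R := inferInstance
  have hfin : Algebra.FiniteType ℤ (MvPolynomial B R) :=
    Algebra.FiniteType.trans (S := R) inferInstance inferInstance
  -- the `ℤ`-algebra structure through `R` and the canonical one are propositionally equal
  have : @Algebra.FiniteType ℤ (MvPolynomial B R) _ _ (Ring.toIntAlgebra _) := by
    have heq : Ring.toIntAlgebra (MvPolynomial B R) =
        AddMonoidAlgebra.algebra :=
      Subsingleton.elim _ _
    rw [heq]
    exact hfin
  obtain ⟨κ, _, _, φ, hφ⟩ := exists_finite_point Δ hΔ
  obtain ⟨p, hp⟩ := CharP.exists κ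
  have hpp : Fact p.Prime := ⟨(CharP.char_is_prime_or_zero κ p).resolve_right
    (CharP.char_ne_zero_of_finite κ p)⟩
  obtain ⟨Q₁, hQ₁⟩ := many_points f.natDegree c p hf0
  set Cc : ℕ := max (4 * f.natDegree.factorial) Cg with hCc
  have hCc1 : 1 ≤ Cc := le_max_of_le_left
    (Nat.succ_le_of_lt (Nat.mul_pos (by norm_num) (Nat.factorial_pos _)))
  refine ⟨(Fintype.card N + 1) * Real.log Cc, fun Q₀ => ?_⟩
  obtain ⟨k, _, _, _, j, hcard, hsplit⟩ := exists_large_extension p (f.map φ) (max Q₀ Q₁)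
  refine ⟨Fintype.card k, (le_max_left _ _).trans hcard, ?_⟩
  -- The constants of the model are specialised by `χ`; the coordinates of affine space vary, and `z`
  -- is the point at which `Δ ≠ 0` and `f` splits.
  let χ : R →+* k := (j.comp φ).comp MvPolynomial.C
  let z : B → k := fun i => j (φ (MvPolynomial.X i))
  let Φ : (B → k) → MvPolynomial B R →+* k :=
    fun y => (MvPolynomial.eval y).comp (MvPolynomial.map χ)
  have hz : Φ z = j.comp φ := by
    apply MvPolynomial.ringHom_ext
    · intro r; simp [Φ, χ]
    · intro i; simp [Φ, z]
  have hmany := hQ₁ k ((le_max_right _ _).trans hcard) B (f.map (MvPolynomial.map χ))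
    (a.map (MvPolynomial.map χ)) (b.map (MvPolynomial.map χ)) (MvPolynomial.map χ Δ)
    (hf.map _) (hf.natDegree_map _)
    (fun i => by rw [coeff_map]; exact (totalDegree_map_le' _ _).trans (hcf i))
    ((totalDegree_map_le' _ _).trans hcΔ)
    (by rw [derivative_map, ← Polynomial.map_mul, ← Polynomial.map_mul, ← Polynomial.map_add, hab,
      map_C])
    z
    (by
      change Φ z Δ ≠ 0
      rw [hz]
      exact (map_ne_zero_iff _ j.injective).2 hφ)
    (by
      rw [Polynomial.map_map]
      change (f.map (Φ z)).Splits
      rw [hz, ← Polynomial.map_map]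
      exact hsplit)
  set G := {y : B → k // MvPolynomial.eval y (MvPolynomial.map χ Δ) ≠ 0 ∧
    ∃ τ, ((f.map (MvPolynomial.map χ)).map (MvPolynomial.eval y)).IsRoot τ} with hG
  have hψ : ∀ y : G, ∃ ψ : T →+* k, (∀ r, ψ (ρ r) = χ r) ∧ ∀ i : B, ψ (x' i) = y.1 i := by
    rintro ⟨y, hy, τ, hτ⟩
    rw [Polynomial.map_map] at hτ
    obtain ⟨ψ, h1, h2⟩ := hlift k (Φ y) τ hτ hy
    refine ⟨ψ, fun r => (h1 r).trans ?_, fun i => (h2 i).trans ?_⟩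
    · simp [Φ]
    · simp [Φ]
  choose ψ hψρ hψx using hψ
  let e : G ≃ Fin (Nat.card G) := Finite.equivFin G
  let Ψ : Fin (Nat.card G) → T →+* k := fun ω => ψ (e.symm ω)
  refine profile_estimate (fun i ω => (Fintype.equivFin k (Ψ ω (x' i)) : ℕ)) (Fintype.card k) Cc
    B.card Fintype.card_pos hCc1 _
    (fun J i => IsAlgebraic (Algebra.adjoin F (x '' J)) (x i)) (isAlgebraic_mono x)
    (fun I => ?_) (fun i ω => Fin.is_lt _) (fun ω ω' h => ?_) (fun I i hI v => ?_) ?_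
  · have := rank_data (F := F) x I
    rwa [hd] at this
  · apply e.symm.injective
    apply Subtype.ext
    funext i
    rw [← hψx, ← hψx]
    exact (Fintype.equivFin k).injective (Fin.ext (h i))
  · exact (fiber_card_le ρ x' Ψ χ (fun ω r => hψρ _ r) I i (g I i hI) (hgu I i hI) (hgc I i hI)
      (hgr I i hI) v).trans ((hCg I i hI).trans (le_max_right _ _))
  · rw [Fintype.card_fin]
    refine le_trans ?_ (Nat.mul_le_mul_right _ (le_max_left _ _))
    rw [Fintype.card_coe] at hmany
    exact hmany

end Assembly

end

/-- **Matúš.** Let `E/F` be a field extension and `x = (x_i : i ∈ N)` a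
finite family of elements of `E`.  Let `r(I)` be the transcendence degree over `F` of
the intermediate field `F(x_i : i ∈ I)` (expressed as the supremum of the sizes of
algebraically independent families in it).  Then `r` lies in the closure of the set of
non-negative scalar multiples of entropy profiles of `N`-indexed random vectors:
algebraic matroids are almost-entropic. -/
theorem algebraic_matroid_almost_entropic {F E N : Type*} [Field F] [Field E]
    [Algebra F E] [Fintype N] [DecidableEq N] (x : N → E) :
    (fun I : Finset N =>
      ((sSup {n : ℕ | ∃ s : Fin n → ↥(IntermediateField.adjoin F (x '' ↑I)),
          AlgebraicIndependent F s} : ℕ) : ℝ))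
    ∈ closure {g : Finset N → ℝ |
        ∃ c : ℝ, 0 ≤ c ∧ ∃ X : FinRandomVector N, g = fun I => c * X.profile I} := by
  obtain ⟨c, hc⟩ := exists_estimate (F := F) x
  exact mem_closure_of_estimate _ c hc
end
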